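/- (Asymptotic profile.) Let (X,d) be a compact geodesic metric space and let H:X×ℝ→ℝ satisfy H(x,p)=H(x,|p|) and (A1)–(A4); set c := max_{x∈X} H(x,0) and A := {x∈X : H(x,0)=c}, assumed nonempty. Let u₀:X→ℝ be Lipschitz continuous and let u ∈ C([0,∞)×X) be a Lipschitz continuous metric viscosity solution of ∂ₜu + H(x,|Du|) = 0 in (0,∞)×X with u(0,·)=u₀. Define φ₋(x) := inf_{t≥0} (u(t,x)+ct), S(x,y) := sup{ w(x) : w∈C(X) a metric viscosity subsolution of H(·,|Dw|)=c in X with w(y)=0 }, and φ∞(x) := min{ S(x,y)+φ₋(y) : y∈A }. Then lim_{t→∞} (u(t,x)+ct) = φ∞(x) for all x ∈ X. -/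

import Mathlib

open Filter Metric Set Topology

noncomputable section

/-- A geodesic metric space: any two points are joined by a constant-speed geodesic. -/
def IsGeodesicSpace (X : Type*) [MetricSpace X] : Prop :=
  ∀ x y : X, ∃ f : ℝ → X, f 0 = x ∧ f 1 = y ∧
    ∀ s ∈ Set.Icc (0:ℝ) 1, ∀ t ∈ Set.Icc (0:ℝ) 1,
      dist (f s) (f t) = |s - t| * dist x y

variable {X : Type*} [MetricSpace X]

/-- Upper local mslope |∇⁺v|(x) = limsup_{y→x} [v(y)-v(x)]₊ / d(y,x). -/
def mslopeUp (v : X → ℝ) (x : X) : ℝ :=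
  Filter.limsup (fun y => max (v y - v x) 0 / dist y x) (𝓝[≠] x)

/-- Lower local mslope |∇⁻v|(x) = limsup_{y→x} [v(y)-v(x)]₋ / d(y,x). -/
def mslopeDown (v : X → ℝ) (x : X) : ℝ :=
  Filter.limsup (fun y => max (v x - v y) 0 / dist y x) (𝓝[≠] x)

/-- Local mslope |∇v|(x) = limsup_{y→x} |v(y)-v(x)| / d(y,x). -/
def mslope (v : X → ℝ) (x : X) : ℝ :=
  Filter.limsup (fun y => |v y - v x| / dist y x) (𝓝[≠] x)

/-- Spatial upper local mslope of a function of time and space. -/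
def slopeUpT (u : ℝ × X → ℝ) (z : ℝ × X) : ℝ := mslopeUp (fun y => u (z.1, y)) z.2

/-- Spatial lower local mslope of a function of time and space. -/
def slopeDownT (u : ℝ × X → ℝ) (z : ℝ × X) : ℝ := mslopeDown (fun y => u (z.1, y)) z.2

/-- Spatial local mslope of a function of time and space. -/
def slopeT (u : ℝ × X → ℝ) (z : ℝ × X) : ℝ := mslope (fun y => u (z.1, y)) z.2

/-- Time derivative ∂ₜu. -/
def timeDeriv (u : ℝ × X → ℝ) (z : ℝ × X) : ℝ := deriv (fun s => u (s, z.2)) z.1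

/-- Locally Lipschitz on a set. -/
def LocLipOn {α : Type*} [PseudoMetricSpace α] (s : Set α) (f : α → ℝ) : Prop :=
  ∀ z ∈ s, ∃ K : NNReal, ∃ t ∈ 𝓝[s] z, LipschitzOnWith K f t

/-- The class 𝒞(Q): locally Lipschitz with (existing) continuous time derivative. -/
def IsCQ (Q : Set (ℝ × X)) (u : ℝ × X → ℝ) : Prop :=
  LocLipOn Q u ∧
  (∀ z ∈ Q, DifferentiableAt ℝ (fun s : ℝ => u (s, z.2)) z.1) ∧
  ContinuousOn (timeDeriv u) Q

/-- The class C̲¹(Q). -/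
def IsC1UnderQ (Q : Set (ℝ × X)) (u : ℝ × X → ℝ) : Prop :=
  IsCQ Q u ∧ Set.EqOn (slopeDownT u) (slopeT u) Q ∧ ContinuousOn (slopeT u) Q

/-- The class C̄¹(Q). -/
def IsC1UpperQ (Q : Set (ℝ × X)) (u : ℝ × X → ℝ) : Prop :=
  IsCQ Q u ∧ Set.EqOn (slopeUpT u) (slopeT u) Q ∧ ContinuousOn (slopeT u) Q

/-- The class 𝒞(U) for stationary problems: locally Lipschitz functions. -/
def IsCU (U : Set X) (v : X → ℝ) : Prop := LocLipOn U v

/-- The class C̲¹(U). -/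
def IsC1UnderU (U : Set X) (v : X → ℝ) : Prop :=
  IsCU U v ∧ Set.EqOn (mslopeDown v) (mslope v) U ∧ ContinuousOn (mslope v) U

/-- The class C̄¹(U). -/
def IsC1UpperU (U : Set X) (v : X → ℝ) : Prop :=
  IsCU U v ∧ Set.EqOn (mslopeUp v) (mslope v) U ∧ ContinuousOn (mslope v) U

/-- F_r(z,p,q) = sup_{p'∈[-1,1]} F(z,p+rp',q) if r ≥ 0, inf if r ≤ 0. -/
def Fr (F : (ℝ × X) → ℝ → ℝ → ℝ) (r : ℝ) (z : ℝ × X) (p q : ℝ) : ℝ :=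
  if 0 ≤ r then sSup ((fun p' => F z (p + r * p') q) '' Set.Icc (-1:ℝ) 1)
  else sInf ((fun p' => F z (p + r * p') q) '' Set.Icc (-1:ℝ) 1)

/-- H_r(x,p) = sup_{p'∈[-1,1]} H(x,p+rp') if r ≥ 0, inf if r ≤ 0. -/
def Hr (H : X → ℝ → ℝ) (r : ℝ) (x : X) (p : ℝ) : ℝ :=
  if 0 ≤ r then sSup ((fun p' => H x (p + r * p')) '' Set.Icc (-1:ℝ) 1)
  else sInf ((fun p' => H x (p + r * p')) '' Set.Icc (-1:ℝ) 1)

/-- Upper semicontinuous envelope (relative to a set) of an extended-real function. -/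
def uscEnv {α : Type*} [TopologicalSpace α] (s : Set α) (u : α → EReal) (z : α) : EReal :=
  Filter.limsup u (𝓝[s] z)

/-- Lower semicontinuous envelope (relative to a set) of an extended-real function. -/
def lscEnv {α : Type*} [TopologicalSpace α] (s : Set α) (u : α → EReal) (z : α) : EReal :=
  Filter.liminf u (𝓝[s] z)

/-- Upper semicontinuous envelope (relative to a set) of a real function. -/
def uscEnvR {α : Type*} [TopologicalSpace α] (s : Set α) (f : α → ℝ) (z : α) : ℝ :=
  Filter.limsup f (𝓝[s] z)

/-- Metric viscosity subsolution of F(z,|Du|,∂ₜu)=0 in Q (Gangbo–Święch). -/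
def IsSubsol (Q : Set (ℝ × X)) (F : (ℝ × X) → ℝ → ℝ → ℝ) (u : ℝ × X → EReal) : Prop :=
  ∀ ψ₁ ψ₂ : ℝ × X → ℝ, IsC1UnderQ Q ψ₁ → IsCQ Q ψ₂ → ∀ z ∈ Q,
    (∃ R > 0, uscEnv Q u z = ((ψ₁ z + ψ₂ z : ℝ) : EReal) ∧
      ∀ w ∈ Metric.ball z R ∩ Q, uscEnv Q u w ≤ ((ψ₁ w + ψ₂ w : ℝ) : EReal)) →
    Fr F (-(uscEnvR Q (slopeT ψ₂) z)) z (slopeT ψ₁ z)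
      (timeDeriv (fun w => ψ₁ w + ψ₂ w) z) ≤ 0

/-- Metric viscosity supersolution of F(z,|Du|,∂ₜu)=0 in Q (Gangbo–Święch). -/
def IsSupersol (Q : Set (ℝ × X)) (F : (ℝ × X) → ℝ → ℝ → ℝ) (u : ℝ × X → EReal) : Prop :=
  ∀ ψ₁ ψ₂ : ℝ × X → ℝ, IsC1UpperQ Q ψ₁ → IsCQ Q ψ₂ → ∀ z ∈ Q,
    (∃ R > 0, lscEnv Q u z = ((ψ₁ z + ψ₂ z : ℝ) : EReal) ∧
      ∀ w ∈ Metric.ball z R ∩ Q, ((ψ₁ w + ψ₂ w : ℝ) : EReal) ≤ lscEnv Q u w) →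
    0 ≤ Fr F (uscEnvR Q (slopeT ψ₂) z) z (slopeT ψ₁ z)
      (timeDeriv (fun w => ψ₁ w + ψ₂ w) z)

/-- Metric viscosity solution. -/
def IsSol (Q : Set (ℝ × X)) (F : (ℝ × X) → ℝ → ℝ → ℝ) (u : ℝ × X → EReal) : Prop :=
  IsSubsol Q F u ∧ IsSupersol Q F u

/-- Metric viscosity subsolution of the stationary equation H(x,|Dv|)=0 in U. -/
def IsSubsolS (U : Set X) (H : X → ℝ → ℝ) (v : X → EReal) : Prop :=
  ∀ ψ₁ ψ₂ : X → ℝ, IsC1UnderU U ψ₁ → IsCU U ψ₂ → ∀ x ∈ U,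
    (∃ R > 0, uscEnv U v x = ((ψ₁ x + ψ₂ x : ℝ) : EReal) ∧
      ∀ w ∈ Metric.ball x R ∩ U, uscEnv U v w ≤ ((ψ₁ w + ψ₂ w : ℝ) : EReal)) →
    Hr H (-(uscEnvR U (mslope ψ₂) x)) x (mslope ψ₁ x) ≤ 0

/-- Metric viscosity supersolution of the stationary equation H(x,|Dv|)=0 in U. -/
def IsSupersolS (U : Set X) (H : X → ℝ → ℝ) (v : X → EReal) : Prop :=
  ∀ ψ₁ ψ₂ : X → ℝ, IsC1UpperU U ψ₁ → IsCU U ψ₂ → ∀ x ∈ U,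
    (∃ R > 0, lscEnv U v x = ((ψ₁ x + ψ₂ x : ℝ) : EReal) ∧
      ∀ w ∈ Metric.ball x R ∩ U, ((ψ₁ w + ψ₂ w : ℝ) : EReal) ≤ lscEnv U v w) →
    0 ≤ Hr H (uscEnvR U (mslope ψ₂) x) x (mslope ψ₁ x)

/-- Metric viscosity solution of the stationary equation. -/
def IsSolS (U : Set X) (H : X → ℝ → ℝ) (v : X → EReal) : Prop :=
  IsSubsolS U H v ∧ IsSupersolS U H v

/-!
The function `v(t,x) = u(t,x) + ct` solves `∂ₜv + G(x,|Dv|) = 0` with `G = H - c`, and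
`G(·,0) ≤ 0` vanishes exactly on `A`.

Upper bound. Comparing `v` with the cones `p d(·,y) + C d(·,y)²` bounds the spatial descent slope of
`v(t,·)` at `x` by any `p` with `G(x,p) > 0`, up to a bounded shift of `t`. The shift disappears in
the limit, so `limsup v` is a stationary subsolution. At points of `A` the map `t ↦ v(t,·)` is
nonincreasing and tends to `φ₋`; hence `limsup v ≤ S(·,y) + φ₋(y)` for all `y ∈ A`.

Lower bound. `φ∞` is a stationary subsolution below `v` on `A`. For `θ < 1`, since `G(x,·)` is
star-shaped about `0`, `θ φ∞` is a strict subsolution off `A`, so doubling variables at a large time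
forces the maximum of `θ φ∞ - v` to lie near `A`, where it is nearly nonpositive. Letting `θ → 1`
gives `liminf v ≥ φ∞`.
-/

open scoped NNReal

/-! ### Slopes of squared distances -/

section Slopes

theorem limsup_nhdsNE_eq_zero {x : X} {q : X → ℝ} {C : ℝ} (h0 : ∀ z, 0 ≤ q z)
    (hC : ∀ z, q z ≤ C * dist z x) : limsup q (𝓝[≠] x) = 0 := by
  rcases (𝓝[≠] x).eq_or_neBot with hbot | _
  · simp [hbot, limsup, limsSup]
  · have hlim : Tendsto (fun z => C * dist z x) (𝓝[≠] x) (𝓝 0) := by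
      have hcts : Continuous fun z => C * dist z x := by fun_prop
      simpa using (hcts.tendsto x).mono_left nhdsWithin_le_nhds
    exact (squeeze_zero h0 hC hlim).limsup_eq

theorem IsGeodesicSpace.exists_tendsto_nhdsNE (hgeo : IsGeodesicSpace X) {x y : X}
    (hxy : x ≠ y) : ∃ f : ℝ → X, Tendsto f (𝓝[>] 0) (𝓝[≠] x) ∧
      ∀ᶠ s in 𝓝[>] 0, dist (f s) x = s * dist x y ∧ dist (f s) y = (1 - s) * dist x y := by
  obtain ⟨f, h0, h1, hf⟩ := hgeo x y
  have hdist : ∀ s ∈ Ioc (0 : ℝ) 1,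
      dist (f s) x = s * dist x y ∧ dist (f s) y = (1 - s) * dist x y := by
    intro s hs
    have hx := hf s ⟨hs.1.le, hs.2⟩ 0 ⟨le_rfl, zero_le_one⟩
    have hy := hf s ⟨hs.1.le, hs.2⟩ 1 ⟨zero_le_one, le_rfl⟩
    rw [h0, sub_zero, abs_of_pos hs.1] at hx
    rw [h1, abs_sub_comm, abs_of_nonneg (sub_nonneg.2 hs.2)] at hy
    exact ⟨hx, hy⟩
  have hIoc : Ioc (0 : ℝ) 1 ∈ 𝓝[>] (0 : ℝ) := Ioc_mem_nhdsGT one_pos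
  refine ⟨f, tendsto_nhdsWithin_iff.2 ⟨tendsto_iff_dist_tendsto_zero.2 ?_, ?_⟩, ?_⟩
  · have hlim : Tendsto (fun s : ℝ => s * dist x y) (𝓝[>] 0) (𝓝 0) := by
      have hcts : Continuous fun s : ℝ => s * dist x y := by fun_prop
      simpa using (hcts.tendsto 0).mono_left nhdsWithin_le_nhds
    refine hlim.congr' ?_
    filter_upwards [hIoc] with s hs using (hdist s hs).1.symm
  · filter_upwards [hIoc] with s hs
    exact dist_pos.1 (by rw [(hdist s hs).1]; exact mul_pos hs.1 (dist_pos.2 hxy))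
  · filter_upwards [hIoc] with s hs using hdist s hs

-- The lower bound is attained along a geodesic from `x` to `y`, the upper bound holds everywhere.
theorem IsGeodesicSpace.limsup_nhdsNE_eq_of_ne (hgeo : IsGeodesicSpace X) {α : ℝ} {x y : X}
    (hxy : x ≠ y) {q : X → ℝ} (hlow : ∀ z, α * (dist x y ^ 2 - dist z y ^ 2) / dist z x ≤ q z)
    (hup : ∀ z, q z ≤ α * (2 * dist x y + dist z x)) (h0 : ∀ z, 0 ≤ q z) :
    limsup q (𝓝[≠] x) = 2 * α * dist x y := by
  obtain ⟨f, hf, hdist⟩ := hgeo.exists_tendsto_nhdsNE hxy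
  have : (𝓝[≠] x).NeBot := hf.neBot
  have hlim : Tendsto (fun z => α * (2 * dist x y + dist z x)) (𝓝[≠] x)
      (𝓝 (2 * α * dist x y)) := by
    have hcts : Continuous fun z => α * (2 * dist x y + dist z x) := by fun_prop
    convert (hcts.tendsto x).mono_left nhdsWithin_le_nhds using 2
    rw [dist_self]; ring
  have hbdd : (𝓝[≠] x).IsBoundedUnder (· ≤ ·) q :=
    hlim.isBoundedUnder_le.mono_le (Eventually.of_forall hup)
  have hcob : (𝓝[≠] x).IsCoboundedUnder (· ≤ ·) q :=
    (isBoundedUnder_of ⟨0, h0⟩ : (𝓝[≠] x).IsBoundedUnder (· ≥ ·) q).isCoboundedUnder_le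
  refine le_antisymm ?_ (le_of_forall_lt fun b hb => ?_)
  · rw [← hlim.limsup_eq]
    exact limsup_le_limsup (Eventually.of_forall hup) hcob hlim.isBoundedUnder_le
  · obtain ⟨b', hbb', hb'⟩ := exists_between hb
    have hpath : Tendsto (fun s : ℝ => α * (2 - s) * dist x y) (𝓝[>] 0)
        (𝓝 (2 * α * dist x y)) := by
      have hcts : Continuous fun s : ℝ => α * (2 - s) * dist x y := by fun_prop
      convert (hcts.tendsto 0).mono_left nhdsWithin_le_nhds using 2
      ring
    refine hbb'.trans_le
      (le_limsup_of_frequently_le (hf.frequently (Eventually.frequently ?_)) hbdd)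
    filter_upwards [self_mem_nhdsWithin, hdist, hpath.eventually (lt_mem_nhds hb')]
      with s hs ⟨hsx, hsy⟩ hlt
    refine hlt.le.trans (le_trans (le_of_eq ?_) (hlow (f s)))
    have hs : s ≠ 0 := ne_of_gt hs
    have hd : dist x y ≠ 0 := dist_ne_zero.2 hxy
    rw [hsx, hsy]
    field_simp
    ring

theorem IsGeodesicSpace.limsup_nhdsNE_eq (hgeo : IsGeodesicSpace X) {α : ℝ} {x y : X}
    {q : X → ℝ} (hlow : ∀ z, α * (dist x y ^ 2 - dist z y ^ 2) / dist z x ≤ q z)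
    (hup : ∀ z, q z ≤ α * (2 * dist x y + dist z x)) (h0 : ∀ z, 0 ≤ q z) :
    limsup q (𝓝[≠] x) = 2 * α * dist x y := by
  rcases eq_or_ne x y with rfl | hxy
  · rw [dist_self, mul_zero]
    exact limsup_nhdsNE_eq_zero h0 fun z => by simpa using hup z
  · exact hgeo.limsup_nhdsNE_eq_of_ne hxy hlow hup h0

theorem abs_sq_dist_sub_le (x y z : X) :
    |dist z y ^ 2 - dist x y ^ 2| ≤ (2 * dist x y + dist z x) * dist z x := by
  rw [sq_sub_sq, abs_mul, abs_of_nonneg (by positivity)]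
  exact mul_le_mul (by linarith [dist_triangle z x y]) (abs_dist_sub_le z x y) (abs_nonneg _)
    (by positivity)

theorem mslope_sq_dist (hgeo : IsGeodesicSpace X) (k α : ℝ) (x y : X) :
    mslope (fun z => k + α * dist z y ^ 2) x = 2 * |α| * dist x y := by
  have habs : ∀ z, |k + α * dist z y ^ 2 - (k + α * dist x y ^ 2)|
      = |α| * |dist z y ^ 2 - dist x y ^ 2| := fun z => by
    rw [← abs_mul]; congr 1; ring
  refine hgeo.limsup_nhdsNE_eq (fun z => ?_) (fun z => ?_) fun z => by positivity
  · rw [habs, abs_sub_comm (dist z y ^ 2)]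
    gcongr
    exact le_abs_self _
  · rw [habs]
    refine div_le_of_le_mul₀ dist_nonneg (by positivity) ?_
    rw [mul_assoc]
    gcongr
    exact abs_sq_dist_sub_le x y z

theorem mslopeDown_sq_dist (hgeo : IsGeodesicSpace X) (k : ℝ) {α : ℝ} (hα : 0 ≤ α) (x y : X) :
    mslopeDown (fun z => k + α * dist z y ^ 2) x = 2 * α * dist x y := by
  have hsub : ∀ z, k + α * dist x y ^ 2 - (k + α * dist z y ^ 2)
      = α * (dist x y ^ 2 - dist z y ^ 2) := fun z => by ring
  refine hgeo.limsup_nhdsNE_eq (fun z => ?_) (fun z => ?_) fun z => by positivity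
  · rw [hsub]
    gcongr
    exact le_max_left _ _
  · rw [hsub]
    refine div_le_of_le_mul₀ dist_nonneg (by positivity) (max_le ?_ (by positivity))
    rw [mul_assoc]
    gcongr
    exact (le_abs_self _).trans ((abs_sub_comm _ _).trans_le (abs_sq_dist_sub_le x y z))

theorem mslopeDown_neg (v : X → ℝ) (x : X) : mslopeDown (-v) x = mslopeUp v x := by
  simp only [mslopeDown, mslopeUp, Pi.neg_apply, neg_sub_neg]

theorem mslopeUp_sq_dist (hgeo : IsGeodesicSpace X) (k : ℝ) {α : ℝ} (hα : α ≤ 0) (x y : X) :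
    mslopeUp (fun z => k + α * dist z y ^ 2) x = 2 * -α * dist x y := by
  rw [← mslopeDown_neg, ← mslopeDown_sq_dist hgeo (-k) (neg_nonneg.2 hα) x y]
  congr 1
  funext z
  simp only [Pi.neg_apply]
  ring

theorem mslope_const (k : ℝ) (x : X) : mslope (fun _ => k) x = 0 :=
  limsup_nhdsNE_eq_zero (C := 0) (by simp) (by simp)

end Slopes

/-! ### Quadratic test functions -/

section TestFunctions

/-- The quadratic test functions of the doubling-of-variables arguments, whose slopes and time
derivatives are explicit. -/
def quadTest (k α b γ t₀ : ℝ) (y : X) (z : ℝ × X) : ℝ :=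
  k + α * dist z.2 y ^ 2 + b * (z.1 - t₀) + γ * (z.1 - t₀) ^ 2

theorem quadTest_mk (k α b γ t₀ : ℝ) (y : X) (t : ℝ) :
    (fun x => quadTest k α b γ t₀ y (t, x)) =
      fun x => k + b * (t - t₀) + γ * (t - t₀) ^ 2 + α * dist x y ^ 2 := by
  funext x
  simp only [quadTest]
  ring

theorem hasDerivAt_quadTest (k α b γ t₀ : ℝ) (y : X) (z : ℝ × X) :
    HasDerivAt (fun s : ℝ => quadTest k α b γ t₀ y (s, z.2)) (b + 2 * γ * (z.1 - t₀)) z.1 := by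
  have h := (hasDerivAt_id z.1).sub_const t₀
  refine (((h.const_mul b).const_add (k + α * dist z.2 y ^ 2)).add
    ((h.pow 2).const_mul γ)).congr_deriv ?_
  simp
  ring

theorem timeDeriv_quadTest (k α b γ t₀ : ℝ) (y : X) (z : ℝ × X) :
    timeDeriv (quadTest k α b γ t₀ y) z = b + 2 * γ * (z.1 - t₀) :=
  (hasDerivAt_quadTest k α b γ t₀ y z).deriv

theorem slopeT_quadTest (hgeo : IsGeodesicSpace X) (k α b γ t₀ : ℝ) (y : X) (z : ℝ × X) :
    slopeT (quadTest k α b γ t₀ y) z = 2 * |α| * dist z.2 y := by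
  rw [slopeT, quadTest_mk, mslope_sq_dist hgeo]

theorem locLipOn_of_locallyLipschitz {α : Type*} [PseudoMetricSpace α] {f : α → ℝ}
    (hf : LocallyLipschitz f) (s : Set α) : LocLipOn s f := fun z _ =>
  let ⟨K, t, ht, h⟩ := hf z
  ⟨K, t, nhdsWithin_le_nhds ht, h⟩

theorem isCQ_quadTest (Q : Set (ℝ × X)) (k α b γ t₀ : ℝ) (y : X) :
    IsCQ Q (quadTest k α b γ t₀ y) := by
  refine ⟨locLipOn_of_locallyLipschitz ?_ Q,
    fun z _ => (hasDerivAt_quadTest k α b γ t₀ y z).differentiableAt, ?_⟩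
  · have hpoly : LocallyLipschitz fun q : ℝ × ℝ =>
        k + α * q.2 ^ 2 + b * (q.1 - t₀) + γ * (q.1 - t₀) ^ 2 :=
      ContDiff.locallyLipschitz (𝕂 := ℝ) (by fun_prop)
    have hdist : LocallyLipschitz fun z : ℝ × X => (z.1, dist z.2 y) :=
      (LipschitzWith.prod_fst.prodMk
        ((LipschitzWith.dist_left y).comp LipschitzWith.prod_snd)).locallyLipschitz
    intro z
    obtain ⟨K, s, hs, hK⟩ := hpoly.comp hdist z
    exact ⟨K, s, hs, fun p hp q hq => hK hp hq⟩
  · simp only [funext (timeDeriv_quadTest k α b γ t₀ y)]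
    fun_prop

theorem continuousOn_slopeT_quadTest (hgeo : IsGeodesicSpace X) (Q : Set (ℝ × X))
    (k α b γ t₀ : ℝ) (y : X) : ContinuousOn (slopeT (quadTest k α b γ t₀ y)) Q := by
  simp only [funext (slopeT_quadTest hgeo k α b γ t₀ y)]
  fun_prop

theorem isC1UnderQ_quadTest (hgeo : IsGeodesicSpace X) (Q : Set (ℝ × X)) (k : ℝ) {α : ℝ}
    (hα : 0 ≤ α) (b γ t₀ : ℝ) (y : X) : IsC1UnderQ Q (quadTest k α b γ t₀ y) :=
  ⟨isCQ_quadTest Q k α b γ t₀ y, fun z _ => by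
    rw [slopeT_quadTest hgeo, abs_of_nonneg hα, slopeDownT, quadTest_mk,
      mslopeDown_sq_dist hgeo _ hα], continuousOn_slopeT_quadTest hgeo Q k α b γ t₀ y⟩

theorem isC1UpperQ_quadTest (hgeo : IsGeodesicSpace X) (Q : Set (ℝ × X)) (k : ℝ) {α : ℝ}
    (hα : α ≤ 0) (b γ t₀ : ℝ) (y : X) : IsC1UpperQ Q (quadTest k α b γ t₀ y) :=
  ⟨isCQ_quadTest Q k α b γ t₀ y, fun z _ => by
    rw [slopeT_quadTest hgeo, abs_of_nonpos hα, slopeUpT, quadTest_mk,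
      mslopeUp_sq_dist hgeo _ hα], continuousOn_slopeT_quadTest hgeo Q k α b γ t₀ y⟩

theorem isC1UnderU_sq_dist (hgeo : IsGeodesicSpace X) (U : Set X) (k : ℝ) {α : ℝ} (hα : 0 ≤ α)
    (y : X) : IsC1UnderU U fun x => k + α * dist x y ^ 2 := by
  have hpoly : LocallyLipschitz fun r : ℝ => k + α * r ^ 2 :=
    ContDiff.locallyLipschitz (𝕂 := ℝ) (by fun_prop)
  refine ⟨locLipOn_of_locallyLipschitz
    (hpoly.comp (LipschitzWith.dist_left y).locallyLipschitz) U, fun x _ => ?_, ?_⟩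
  · rw [mslopeDown_sq_dist hgeo k hα, mslope_sq_dist hgeo, abs_of_nonneg hα]
  · simp only [funext fun x => mslope_sq_dist hgeo k α x y]
    fun_prop

theorem isCQ_const (Q : Set (ℝ × X)) (k : ℝ) : IsCQ Q fun _ => k := by
  refine ⟨locLipOn_of_locallyLipschitz (LipschitzWith.const k).locallyLipschitz Q,
    fun _ _ => differentiableAt_const k, ?_⟩
  have hderiv : timeDeriv (fun _ : ℝ × X => k) = fun _ => 0 := by
    funext z
    simp [timeDeriv]
  rw [hderiv]
  exact continuousOn_const

theorem neBot_nhdsWithin_of_mem {α : Type*} [TopologicalSpace α] {s : Set α} {z : α}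
    (hz : z ∈ s) : (𝓝[s] z).NeBot :=
  mem_closure_iff_nhdsWithin_neBot.1 (subset_closure hz)

theorem uscEnvR_const {α : Type*} [TopologicalSpace α] {s : Set α} {z : α} (hz : z ∈ s) (k : ℝ) :
    uscEnvR s (fun _ => k) z = k :=
  have := neBot_nhdsWithin_of_mem hz
  limsup_const k

theorem uscEnvR_slopeT_const {Q : Set (ℝ × X)} {z : ℝ × X} (hz : z ∈ Q) (k : ℝ) :
    uscEnvR Q (slopeT fun _ : ℝ × X => k) z = 0 := by
  have hslope : slopeT (fun _ : ℝ × X => k) = fun _ => 0 := funext fun w => mslope_const k w.2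
  rw [hslope, uscEnvR_const hz]

theorem uscEnvR_mslope_const {U : Set X} {x : X} (hx : x ∈ U) (k : ℝ) :
    uscEnvR U (mslope fun _ : X => k) x = 0 := by
  rw [funext (mslope_const k), uscEnvR_const hx]

theorem uscEnv_coe {α : Type*} [TopologicalSpace α] {s : Set α} {u : α → ℝ}
    (hu : ContinuousOn u s) {z : α} (hz : z ∈ s) :
    uscEnv s (fun w => (u w : EReal)) z = u z :=
  have := neBot_nhdsWithin_of_mem hz
  ((continuous_coe_real_ereal.tendsto _).comp (hu z hz)).limsup_eq

theorem lscEnv_coe {α : Type*} [TopologicalSpace α] {s : Set α} {u : α → ℝ}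
    (hu : ContinuousOn u s) {z : α} (hz : z ∈ s) :
    lscEnv s (fun w => (u w : EReal)) z = u z :=
  have := neBot_nhdsWithin_of_mem hz
  ((continuous_coe_real_ereal.tendsto _).comp (hu z hz)).liminf_eq

theorem Fr_zero_left {Y : Type*} (F : (ℝ × Y) → ℝ → ℝ → ℝ) (z : ℝ × Y) (p q : ℝ) :
    Fr F 0 z p q = F z p q := by
  simp [Fr]

theorem Hr_zero_left {Y : Type*} (H : Y → ℝ → ℝ) (x : Y) (p : ℝ) : Hr H 0 x p = H x p := by
  simp [Hr]

end TestFunctions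

/-! ### Quadratic viscosity inequalities -/

section Quadratic

variable {G : X → ℝ → ℝ} {v : ℝ → X → ℝ} {w : X → ℝ}

/-- Viscosity subsolution inequality of `∂ₜv + G(x,|Dv|) ≤ 0` for quadratic test functions touching
`v` from above; touching is required on `[s,∞) × X`, `s < t₀`, rather than locally, because the
arguments below always produce such global maxima. -/
def QuadSubsol (G : X → ℝ → ℝ) (v : ℝ → X → ℝ) : Prop :=
  ∀ s t₀ : ℝ, ∀ x₀ y : X, ∀ α b γ : ℝ, 0 ≤ s → s < t₀ → 0 ≤ α →
    (∀ t ≥ s, ∀ x, v t x ≤ v t₀ x₀ + α * (dist x y ^ 2 - dist x₀ y ^ 2)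
      + b * (t - t₀) + γ * (t - t₀) ^ 2) →
    b + G x₀ (2 * α * dist x₀ y) ≤ 0

/-- Viscosity supersolution inequality of `∂ₜv + G(x,|Dv|) ≥ 0` for quadratic test functions
touching `v` from below, with the conventions of `QuadSubsol`. -/
def QuadSupersol (G : X → ℝ → ℝ) (v : ℝ → X → ℝ) : Prop :=
  ∀ s t₀ : ℝ, ∀ x₀ y : X, ∀ α b γ : ℝ, 0 ≤ s → s < t₀ → 0 ≤ α →
    (∀ t ≥ s, ∀ x, v t₀ x₀ - α * (dist x y ^ 2 - dist x₀ y ^ 2)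
      + b * (t - t₀) + γ * (t - t₀) ^ 2 ≤ v t x) →
    0 ≤ b + G x₀ (2 * α * dist x₀ y)

/-- Continuous viscosity subsolutions of the stationary equation `G(x,|Dw|) = 0` on the whole
space, the competitors in the definition of the critical distance. -/
def IsContSubsol (G : X → ℝ → ℝ) (w : X → ℝ) : Prop :=
  Continuous w ∧ IsSubsolS univ G fun x => (w x : EReal)

theorem lt_fst_of_mem_ball {s t₀ : ℝ} {x₀ : X} {z : ℝ × X} (hz : z ∈ ball (t₀, x₀) (t₀ - s)) :
    s < z.1 := by
  have hdist : |z.1 - t₀| < t₀ - s := (le_max_left _ _).trans_lt hz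
  linarith [(abs_lt.1 hdist).1]

theorem IsSubsol.quadSubsol (hgeo : IsGeodesicSpace X) {H : X → ℝ → ℝ} {u : ℝ × X → ℝ} (c : ℝ)
    (hu : ContinuousOn u (Ioi (0 : ℝ) ×ˢ univ))
    (hsub : IsSubsol (Ioi (0 : ℝ) ×ˢ univ) (fun z p q => q + H z.2 p) fun z => (u z : EReal)) :
    QuadSubsol (fun x p => H x p - c) fun t x => u (t, x) + c * t := by
  intro s t₀ x₀ y α b γ hs hst hα hle
  have hz : (t₀, x₀) ∈ Ioi (0 : ℝ) ×ˢ (univ : Set X) := ⟨hs.trans_lt hst, trivial⟩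
  have hvisc := hsub (quadTest (u (t₀, x₀) - α * dist x₀ y ^ 2) α (b - c) γ t₀ y) (fun _ => 0)
    (isC1UnderQ_quadTest hgeo _ _ hα _ _ _ _) (isCQ_const _ 0) (t₀, x₀) hz
    ⟨t₀ - s, sub_pos.2 hst, by rw [uscEnv_coe hu hz]; simp [quadTest], fun w hw => by
      rw [uscEnv_coe hu hw.2, EReal.coe_le_coe_iff]
      simp only [quadTest]
      linarith [hle w.1 (lt_fst_of_mem_ball hw.1).le w.2]⟩
  simp only [uscEnvR_slopeT_const hz, neg_zero, Fr_zero_left, slopeT_quadTest hgeo,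
    abs_of_nonneg hα, add_zero, timeDeriv_quadTest, sub_self, mul_zero] at hvisc
  linarith

theorem IsSupersol.quadSupersol (hgeo : IsGeodesicSpace X) {H : X → ℝ → ℝ} {u : ℝ × X → ℝ}
    (c : ℝ) (hu : ContinuousOn u (Ioi (0 : ℝ) ×ˢ univ))
    (hsup : IsSupersol (Ioi (0 : ℝ) ×ˢ univ) (fun z p q => q + H z.2 p) fun z => (u z : EReal)) :
    QuadSupersol (fun x p => H x p - c) fun t x => u (t, x) + c * t := by
  intro s t₀ x₀ y α b γ hs hst hα hle
  have hz : (t₀, x₀) ∈ Ioi (0 : ℝ) ×ˢ (univ : Set X) := ⟨hs.trans_lt hst, trivial⟩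
  have hvisc := hsup (quadTest (u (t₀, x₀) + α * dist x₀ y ^ 2) (-α) (b - c) γ t₀ y) (fun _ => 0)
    (isC1UpperQ_quadTest hgeo _ _ (neg_nonpos.2 hα) _ _ _ _) (isCQ_const _ 0) (t₀, x₀) hz
    ⟨t₀ - s, sub_pos.2 hst, by rw [lscEnv_coe hu hz]; simp [quadTest], fun w hw => by
      rw [lscEnv_coe hu hw.2, EReal.coe_le_coe_iff]
      simp only [quadTest]
      linarith [hle w.1 (lt_fst_of_mem_ball hw.1).le w.2]⟩
  simp only [uscEnvR_slopeT_const hz, Fr_zero_left, slopeT_quadTest hgeo, abs_neg,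
    abs_of_nonneg hα, add_zero, timeDeriv_quadTest, sub_self, mul_zero] at hvisc
  linarith

theorem IsContSubsol.apply_le_zero (hgeo : IsGeodesicSpace X) (hw : IsContSubsol G w) {x₀ y : X}
    {α : ℝ} (hα : 0 ≤ α) (hle : ∀ x, w x ≤ w x₀ + α * (dist x y ^ 2 - dist x₀ y ^ 2)) :
    G x₀ (2 * α * dist x₀ y) ≤ 0 := by
  have henv : ∀ x, uscEnv univ (fun x => (w x : EReal)) x = w x := fun x =>
    uscEnv_coe hw.1.continuousOn (mem_univ x)
  have hvisc := hw.2 (fun x => w x₀ - α * dist x₀ y ^ 2 + α * dist x y ^ 2) (fun _ => 0)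
    (isC1UnderU_sq_dist hgeo univ _ hα y)
    (locLipOn_of_locallyLipschitz (LipschitzWith.const 0).locallyLipschitz _) x₀ trivial
    ⟨1, one_pos, by rw [henv]; simp, fun x _ => by
      rw [henv, EReal.coe_le_coe_iff]
      linarith [hle x]⟩
  rwa [uscEnvR_mslope_const (mem_univ x₀), neg_zero, Hr_zero_left, mslope_sq_dist hgeo,
    abs_of_nonneg hα] at hvisc

theorem IsContSubsol.quadSubsol (hgeo : IsGeodesicSpace X) (hw : IsContSubsol G w) :
    QuadSubsol G fun _ => w := by
  intro s t₀ x₀ y α b γ _ hst hα hle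
  have hb : b = 0 := by
    have hmin : IsLocalMin (fun t : ℝ => b * (t - t₀) + γ * (t - t₀) ^ 2) t₀ := by
      filter_upwards [Ioi_mem_nhds hst] with t ht
      have := hle t (le_of_lt ht) x₀
      simp only [sub_self, mul_zero, zero_pow two_ne_zero, add_zero] at this ⊢
      linarith
    have hderiv : HasDerivAt (fun t : ℝ => b * (t - t₀) + γ * (t - t₀) ^ 2) b t₀ := by
      have h := (hasDerivAt_id t₀).sub_const t₀
      exact ((h.const_mul b).add ((h.pow 2).const_mul γ)).congr_deriv (by simp)
    exact hmin.hasDerivAt_eq_zero hderiv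
  rw [hb, zero_add]
  exact hw.apply_le_zero hgeo hα fun x => by simpa using hle t₀ hst.le x

end Quadratic

/-! ### Penalized maxima -/

section PenalizedMaxima

variable {Y : Type*} [TopologicalSpace Y] [CompactSpace Y] [Nonempty Y] {f : ℝ × Y → ℝ}

theorem exists_isMaxOn_Ici_prod {g : ℝ → ℝ} {s : ℝ} (hf : ContinuousOn f (Ici s ×ˢ univ))
    (hfg : ∀ t ≥ s, ∀ y, f (t, y) ≤ g t) (hg : Tendsto g atTop atBot) :
    ∃ t₁ ≥ s, ∃ y₁, ∀ t ≥ s, ∀ y, f (t, y) ≤ f (t₁, y₁) := by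
  obtain ⟨y₀⟩ := ‹Nonempty Y›
  obtain ⟨T, hT⟩ := eventually_atTop.1 (hg.eventually_le_atBot (f (s, y₀)))
  have hcompact : IsCompact (Icc s (max s T) ×ˢ (univ : Set Y)) :=
    isCompact_Icc.prod isCompact_univ
  have hs : (s, y₀) ∈ Icc s (max s T) ×ˢ (univ : Set Y) := ⟨⟨le_rfl, le_max_left _ _⟩, trivial⟩
  obtain ⟨⟨t₁, y₁⟩, hmem, hmax⟩ := hcompact.exists_isMaxOn ⟨_, hs⟩
    (hf.mono (prod_mono Icc_subset_Ici_self le_rfl))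
  refine ⟨t₁, hmem.1.1, y₁, fun t ht y => ?_⟩
  rcases le_total t (max s T) with htT | htT
  · exact hmax (show (t, y) ∈ Icc s (max s T) ×ˢ (univ : Set Y) from ⟨⟨ht, htT⟩, trivial⟩)
  · exact (hfg t ht y).trans ((hT t ((le_max_right _ _).trans htT)).trans (hmax hs))

theorem tendsto_affine_sub_sq_atBot (a b t₀ : ℝ) {γ : ℝ} (hγ : 0 < γ) :
    Tendsto (fun t => a + b * t - γ * (t - t₀) ^ 2) atTop atBot := by
  have hprod : Tendsto (fun t : ℝ => t * (b + 2 * γ * t₀ - γ * t)) atTop atBot :=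
    tendsto_id.atTop_mul_atBot₀
      (tendsto_atBot_add_const_left _ _ (tendsto_neg_atBot_iff.2 (tendsto_id.const_mul_atTop hγ)))
  refine (tendsto_atBot_add_const_left _ (a - γ * t₀ ^ 2) hprod).congr fun t => ?_
  ring

theorem exists_isMax_sub_sq {s a b γ : ℝ} (t₀ : ℝ) (hf : ContinuousOn f (Ici s ×ˢ univ))
    (hle : ∀ t ≥ s, ∀ y, f (t, y) ≤ a + b * t) (hγ : 0 < γ) :
    ∃ t₁ ≥ s, ∃ y₁, ∀ t ≥ s, ∀ y,
      f (t, y) - γ * (t - t₀) ^ 2 ≤ f (t₁, y₁) - γ * (t₁ - t₀) ^ 2 :=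
  exists_isMaxOn_Ici_prod (f := fun z => f z - γ * (z.1 - t₀) ^ 2) (hf.sub (by fun_prop))
    (fun t ht y => sub_le_sub_right (hle t ht y) _) (tendsto_affine_sub_sq_atBot a b t₀ hγ)

-- The penalization `γ (t - t₀)²` localizes the maximum near `t₀` and has small derivative there.
theorem exists_isMax_sub_sq_of_osc_le (Y : Type*) [TopologicalSpace Y] [CompactSpace Y]
    [Nonempty Y] {B η : ℝ} (hB : 0 ≤ B) (hη : 0 < η) :
    ∃ ρ > 0, ∃ γ > 0, ∀ f : ℝ × Y → ℝ, ContinuousOn f (Ici 0 ×ˢ univ) →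
      (∀ t ≥ 0, ∀ t' ≥ 0, ∀ y, f (t, y) ≤ f (t', y) + B) → ∀ t₀ ≥ 0,
      ∃ t₁ ≥ 0, ∃ y₁, |t₁ - t₀| < ρ ∧ |2 * γ * (t₁ - t₀)| < η ∧ ∀ t ≥ 0, ∀ y,
        f (t, y) - γ * (t - t₀) ^ 2 ≤ f (t₁, y₁) - γ * (t₁ - t₀) ^ 2 := by
  set ρ := (2 * B + 1) / η with hρ
  have hρ0 : 0 < ρ := by positivity
  have hηρ : η * ρ = 2 * B + 1 := by rw [hρ]; field_simp
  refine ⟨ρ, hρ0, η / (2 * ρ), by positivity, fun f hf hosc t₀ ht₀ => ?_⟩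
  have hf0 : Continuous fun y => f (0, y) :=
    hf.comp_continuous (by fun_prop) fun _ => ⟨self_mem_Ici, trivial⟩
  obtain ⟨y₀, -, hy₀⟩ := isCompact_univ.exists_isMaxOn univ_nonempty hf0.continuousOn
  obtain ⟨t₁, ht₁, y₁, hmax⟩ := exists_isMax_sub_sq (a := f (0, y₀) + B) (b := 0) t₀ hf
    (fun t ht y => by linarith [hosc t ht 0 le_rfl y, isMaxOn_iff.1 hy₀ y trivial])
    (by positivity : 0 < η / (2 * ρ))
  have hnear : |t₁ - t₀| < ρ := by
    refine abs_lt_of_sq_lt_sq (lt_of_mul_lt_mul_left (a := η / (2 * ρ)) ?_ (by positivity)) hρ0.le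
    have hle := hmax t₀ ht₀ y₁
    rw [sub_self, zero_pow two_ne_zero] at hle
    have hB : η / (2 * ρ) * ρ ^ 2 = B + 1 / 2 := by field_simp; linarith
    linarith [hosc t₁ ht₁ t₀ ht₀ y₁]
  refine ⟨t₁, ht₁, y₁, hnear, ?_, hmax⟩
  calc |2 * (η / (2 * ρ)) * (t₁ - t₀)| = η / ρ * |t₁ - t₀| := by
        rw [show 2 * (η / (2 * ρ)) = η / ρ by field_simp, abs_mul, abs_of_pos (by positivity)]
    _ < η / ρ * ρ := by gcongr
    _ = η := by field_simp

end PenalizedMaxima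

/-! ### Estimates for subsolutions and supersolutions -/

section Estimates

theorem le_of_forall_pos_le_add_mul {a b k : ℝ} (h : ∀ η > 0, a ≤ b + η * k) : a ≤ b := by
  have hlim : Tendsto (fun η : ℝ => b + η * k) (𝓝[>] 0) (𝓝 b) := by
    have hcts : Continuous fun η : ℝ => b + η * k := by fun_prop
    simpa using (hcts.tendsto 0).mono_left nhdsWithin_le_nhds
  exact ge_of_tendsto hlim (eventually_nhdsWithin_of_forall h)

theorem mul_dist_le_of_lipschitzWith {M : ℝ≥0} {f : X → ℝ} (hf : LipschitzWith M f) {E : ℝ}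
    {x y : X} (h : f y + E * dist x y ^ 2 ≤ f x) : E * dist x y ≤ M := by
  rcases (dist_nonneg : 0 ≤ dist x y).eq_or_lt with hd | hd
  · rw [← hd, mul_zero]
    exact M.2
  · exact le_of_mul_le_mul_right (by linarith [hf.le_add_mul x y]) hd

variable {G : X → ℝ → ℝ} {v : ℝ → X → ℝ} {M : ℝ≥0}

-- Completing the square, `p r ≤ p D + (p / 2D) (r² - D²)` with equality at `r = D`.
theorem QuadSubsol.apply_cone_le (hsub : QuadSubsol G v) {s t₀ p C b γ : ℝ} {x₀ y : X}
    (hs : 0 ≤ s) (hst : s < t₀) (hp : 0 ≤ p) (hC : 0 ≤ C) (hxy : x₀ ≠ y)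
    (hle : ∀ t ≥ s, ∀ x, v t x ≤ v t₀ x₀ + p * (dist x y - dist x₀ y)
      + C * (dist x y ^ 2 - dist x₀ y ^ 2) + b * (t - t₀) + γ * (t - t₀) ^ 2) :
    b + G x₀ (p + 2 * C * dist x₀ y) ≤ 0 := by
  have hD : 0 < dist x₀ y := dist_pos.2 hxy
  have hvisc := hsub s t₀ x₀ y (p / (2 * dist x₀ y) + C) b γ hs hst (by positivity)
    fun t ht x => by
      have hsq : p / (2 * dist x₀ y) * (dist x y ^ 2 - dist x₀ y ^ 2)
          - p * (dist x y - dist x₀ y)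
          = p / (2 * dist x₀ y) * (dist x y - dist x₀ y) ^ 2 := by
        field_simp
        ring
      have hnonneg : 0 ≤ p / (2 * dist x₀ y) * (dist x y - dist x₀ y) ^ 2 := by positivity
      linarith [hle t ht x]
  rwa [show 2 * (p / (2 * dist x₀ y) + C) * dist x₀ y = p + 2 * C * dist x₀ y by field_simp]
    at hvisc

theorem IsContSubsol.lipschitzWith [CompactSpace X] (hgeo : IsGeodesicSpace X) {K : ℝ≥0}
    (hK : ∀ x, 0 < G x K) {w : X → ℝ} (hw : IsContSubsol G w) : LipschitzWith K w := by
  refine LipschitzWith.of_le_add_mul K fun x y => ?_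
  have hcts : Continuous fun z => w z - K * dist z y :=
    hw.1.sub (by fun_prop)
  obtain ⟨x₁, -, hmax⟩ :=
    isCompact_univ.exists_isMaxOn ⟨x, mem_univ x⟩ hcts.continuousOn
  have hmax : ∀ z, w z - K * dist z y ≤ w x₁ - K * dist x₁ y := fun z => hmax (mem_univ z)
  have hxy : x₁ = y := by
    by_contra hne
    have hvisc := (hw.quadSubsol hgeo).apply_cone_le (t₀ := 1) (b := 0) (γ := 0) (p := K) (C := 0)
      le_rfl one_pos K.2 le_rfl hne fun t _ z => by linarith [hmax z]
    simp only [mul_zero, zero_mul, add_zero, zero_add] at hvisc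
    exact hvisc.not_gt (hK x₁)
  have hxmax := hmax x
  rw [hxy, dist_self, mul_zero] at hxmax
  linarith

theorem QuadSupersol.le_of_le_initial [CompactSpace X] (hsup : QuadSupersol G v)
    (hG0 : ∀ x, G x 0 ≤ 0) (hcont : ContinuousOn (Function.uncurry v) (Ici 0 ×ˢ univ)) {a b m : ℝ}
    (hgrowth : ∀ t ≥ 0, ∀ x, -v t x ≤ a + b * t) (hm : ∀ x, m ≤ v 0 x) {t : ℝ} (ht : 0 ≤ t)
    (x : X) : m ≤ v t x := by
  refine le_of_forall_pos_le_add_mul (k := t ^ 2) fun η hη => ?_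
  have : Nonempty X := ⟨x⟩
  obtain ⟨t₁, ht₁, x₁, hmax⟩ := exists_isMax_sub_sq 0 hcont.neg hgrowth hη
  simp only [sub_zero, Function.uncurry_apply_pair, Pi.neg_apply] at hmax
  have ht₁0 : t₁ = 0 := by
    by_contra hne
    have hpos : 0 < t₁ := lt_of_le_of_ne ht₁ (Ne.symm hne)
    have hvisc := hsup 0 t₁ x₁ x₁ 0 (-(2 * η * t₁)) (-η) le_rfl hpos le_rfl fun t ht x => by
      linarith [hmax t ht x]
    simp only [mul_zero, zero_mul] at hvisc
    have : 0 < 2 * η * t₁ := by positivity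
    linarith [hG0 x₁]
  subst ht₁0
  linarith [hmax t ht x, hm x₁]

-- At a maximum of `v - C d(·, y)² - η (t - s) - η (t - s)²` with `C` large, the equation forbids
-- `t₁ > s` because `G` is almost nonnegative near `y`.
theorem QuadSubsol.exists_initial_max [CompactSpace X] (hsub : QuadSubsol G v)
    (hG : Continuous (Function.uncurry G)) (hmono : ∀ x, MonotoneOn (G x) (Ici 0))
    (hcont : ContinuousOn (Function.uncurry v) (Ici 0 ×ˢ univ))
    (hlip : ∀ t ≥ 0, LipschitzWith M (v t)) {a b : ℝ}
    (hgrowth : ∀ t ≥ 0, ∀ x, v t x ≤ a + b * t) {y : X} (hy : G y 0 = 0) {s η : ℝ} (hs : 0 ≤ s)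
    (hη : 0 < η) : ∃ x₁, dist x₁ y * M ≤ η ∧
      ∀ t ≥ s, v t y ≤ v s x₁ + η * (t - s) + η * (t - s) ^ 2 := by
  have : Nonempty X := ⟨y⟩
  obtain ⟨δ, hδ, hball⟩ := Metric.mem_nhds_iff.1
    ((hG.uncurry_right 0).continuousAt.eventually (lt_mem_nhds (show -η < G y 0 by linarith)))
  obtain ⟨C, hC0, hCδ, hCη⟩ := ((eventually_gt_atTop 0).and
    ((eventually_gt_atTop (M / δ)).and (eventually_ge_atTop (M ^ 2 / η)))).exists
  rw [div_lt_iff₀ hδ] at hCδ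
  rw [div_le_iff₀ hη] at hCη
  obtain ⟨t₁, ht₁, x₁, hmax⟩ := exists_isMax_sub_sq (s := s) (a := a) (b := b) s
    (f := fun z : ℝ × X => v z.1 z.2 - (C * dist z.2 y ^ 2 + η * (z.1 - s)))
    ((hcont.mono (prod_mono (Ici_subset_Ici.2 hs) le_rfl)).sub (by fun_prop))
    (fun t ht x => (sub_le_self _ (add_nonneg (by positivity)
      (mul_nonneg hη.le (sub_nonneg.2 ht)))).trans (hgrowth t (hs.trans ht) x)) hη
  have hCd : C * dist x₁ y ≤ M := by
    refine mul_dist_le_of_lipschitzWith (hlip t₁ (hs.trans ht₁)) ?_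
    have hle := hmax t₁ ht₁ y
    rw [dist_self] at hle
    linarith
  have hx₁ : -η < G x₁ 0 := hball (lt_of_mul_lt_mul_left (hCd.trans_lt hCδ) hC0.le)
  have ht₁s : t₁ = s := by
    by_contra hne
    have hpos : s < t₁ := lt_of_le_of_ne ht₁ (Ne.symm hne)
    have hvisc := hsub s t₁ x₁ y C (η + 2 * η * (t₁ - s)) η hs hpos hC0.le fun t ht x => by
      linarith [hmax t ht x]
    have hslope : (0 : ℝ) ≤ 2 * C * dist x₁ y := by positivity
    have hGle := hmono x₁ self_mem_Ici hslope hslope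
    linarith [mul_pos (mul_pos two_pos hη) (sub_pos.2 hpos)]
  refine ⟨x₁, le_of_mul_le_mul_left ?_ hC0, fun t ht => ?_⟩
  · calc C * (dist x₁ y * M) = C * dist x₁ y * M := by ring
      _ ≤ M * M := by gcongr
      _ ≤ C * η := by linarith
  · have hle := hmax t ht y
    have hsq : 0 ≤ C * dist x₁ y ^ 2 := by positivity
    simp only [ht₁s, dist_self, sub_self] at hle
    linarith

theorem QuadSubsol.antitoneOn [CompactSpace X] (hsub : QuadSubsol G v)
    (hG : Continuous (Function.uncurry G)) (hmono : ∀ x, MonotoneOn (G x) (Ici 0))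
    (hcont : ContinuousOn (Function.uncurry v) (Ici 0 ×ˢ univ))
    (hlip : ∀ t ≥ 0, LipschitzWith M (v t)) {a b : ℝ}
    (hgrowth : ∀ t ≥ 0, ∀ x, v t x ≤ a + b * t) {y : X} (hy : G y 0 = 0) :
    AntitoneOn (fun t => v t y) (Ici 0) := by
  intro s hs t _ hst
  refine le_of_forall_pos_le_add_mul (k := 1 + (t - s) + (t - s) ^ 2) fun η hη => ?_
  obtain ⟨x₁, hx₁, hle⟩ := hsub.exists_initial_max hG hmono hcont hlip hgrowth hy hs hη
  linarith [hle t hst, (hlip s hs).le_add_mul x₁ y]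

theorem QuadSubsol.eq_of_isMax_cone (hsub : QuadSubsol G v)
    (hmono : ∀ x, MonotoneOn (G x) (Ici 0)) {t₀ t₁ p C γ η r : ℝ} {x₀ x₁ y : X}
    (ht₁ : 0 < t₁) (hlip : LipschitzWith M (v t₁)) (hp : 0 ≤ p) (hC : 0 < C)
    (hball : ∀ x ∈ ball x₀ r, η ≤ G x p) (hCr : M < C * (r / 2)) (hy : dist x₀ y < r / 2)
    (hγ : |2 * γ * (t₁ - t₀)| < η)
    (hmax : ∀ t ≥ 0, ∀ x, v t x - (p * dist x y + C * dist x y ^ 2) - γ * (t - t₀) ^ 2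
      ≤ v t₁ x₁ - (p * dist x₁ y + C * dist x₁ y ^ 2) - γ * (t₁ - t₀) ^ 2) : x₁ = y := by
  by_contra hne
  have hCd : C * dist x₁ y ≤ M := by
    refine mul_dist_le_of_lipschitzWith hlip ?_
    have hle := hmax t₁ ht₁.le y
    have : 0 ≤ p * dist x₁ y := by positivity
    rw [dist_self] at hle
    linarith
  have hx₁ : x₁ ∈ ball x₀ r := by
    have : dist x₁ y < r / 2 := lt_of_mul_lt_mul_left (hCd.trans_lt hCr) hC.le
    rw [mem_ball]
    linarith [dist_triangle_right x₁ x₀ y]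
  have hvisc := hsub.apply_cone_le (γ := γ) (b := 2 * γ * (t₁ - t₀)) le_rfl ht₁ hp hC.le hne
    fun t ht x => by linarith [hmax t ht x]
  have hle : p ≤ p + 2 * C * dist x₁ y := le_add_of_nonneg_right (by positivity)
  have hGle := hmono x₁ (mem_Ici.2 hp) (mem_Ici.2 (hp.trans hle)) hle
  linarith [hball x₁ hx₁, (abs_lt.1 hγ).1]

theorem QuadSubsol.exists_sub_le [CompactSpace X] (hsub : QuadSubsol G v)
    (hmono : ∀ x, MonotoneOn (G x) (Ici 0))
    (hcont : ContinuousOn (Function.uncurry v) (Ici 0 ×ˢ univ))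
    (hlip : ∀ t ≥ 0, LipschitzWith M (v t)) {B : ℝ} (hB : ∀ t ≥ 0, ∀ x, |v t x| ≤ B)
    {x₀ : X} {p r η : ℝ} (hp : 0 ≤ p) (hr : 0 < r) (hη : 0 < η)
    (hball : ∀ x ∈ ball x₀ r, η ≤ G x p) :
    ∃ ρ, ∀ t₀ > ρ, ∀ y, ∃ t₁ ≥ 0, t₀ - ρ ≤ t₁ ∧
      v t₀ x₀ - v t₁ y ≤ p * dist x₀ y + 2 * (M + 1) / r * dist x₀ y ^ 2 := by
  have : Nonempty X := ⟨x₀⟩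
  have hB0 : 0 ≤ B := (abs_nonneg _).trans (hB 0 le_rfl x₀)
  set C : ℝ := 2 * (M + 1) / r with hC
  have hC0 : 0 < C := by positivity
  have hCr : C * (r / 2) = M + 1 := by rw [hC]; field_simp
  obtain ⟨ρ, hρ, γ, hγ, hmax⟩ :=
    exists_isMax_sub_sq_of_osc_le X (mul_nonneg zero_le_two hB0) hη
  refine ⟨ρ, fun t₀ ht₀ y => ?_⟩
  have ht₀0 : 0 ≤ t₀ := hρ.le.trans (le_of_lt ht₀)
  rcases le_or_gt (r / 2) (dist x₀ y) with hfar | hnear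
  · refine ⟨t₀, ht₀0, by linarith, ?_⟩
    have hM : M ≤ C * dist x₀ y := by
      linarith [mul_le_mul_of_nonneg_left hfar hC0.le]
    calc v t₀ x₀ - v t₀ y ≤ M * dist x₀ y := by linarith [(hlip t₀ ht₀0).le_add_mul x₀ y]
      _ ≤ C * dist x₀ y * dist x₀ y := by gcongr
      _ ≤ p * dist x₀ y + C * dist x₀ y ^ 2 := by
        linarith [mul_nonneg hp (dist_nonneg (x := x₀) (y := y))]
  · obtain ⟨t₁, ht₁, x₁, hρt, hγt, hle⟩ := hmax
      (fun z => v z.1 z.2 - (p * dist z.2 y + C * dist z.2 y ^ 2)) (hcont.sub (by fun_prop))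
      (fun t ht t' ht' x => by
        linarith [(abs_le.1 (hB t ht x)).2, (abs_le.1 (hB t' ht' x)).1]) t₀ ht₀0
    have ht₁ρ : t₀ - ρ < t₁ := by linarith [(abs_lt.1 hρt).1]
    obtain rfl : x₁ = y := hsub.eq_of_isMax_cone hmono (by linarith) (hlip t₁ ht₁) hp hC0 hball
      (by rw [hCr]; exact lt_add_one _) hnear hγt hle
    refine ⟨t₁, ht₁, ht₁ρ.le, ?_⟩
    have hle₀ := hle t₀ ht₀0 x₀
    have hsq : 0 ≤ γ * (t₁ - t₀) ^ 2 := by positivity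
    simp only [dist_self, sub_self] at hle₀
    linarith

theorem exists_ball_half_le (hG : Continuous (Function.uncurry G)) {x₀ : X} {p : ℝ}
    (hpos : 0 < G x₀ p) : ∃ r > 0, ∀ x ∈ ball x₀ r, G x₀ p / 2 ≤ G x p := by
  obtain ⟨r, hr, hball⟩ := Metric.mem_nhds_iff.1
    ((hG.uncurry_right p).continuousAt.eventually (le_mem_nhds (half_lt_self hpos)))
  exact ⟨r, hr, hball⟩

theorem exists_isContSubsol_sub_le [CompactSpace X] (hgeo : IsGeodesicSpace X)
    (hG : Continuous (Function.uncurry G)) (hmono : ∀ x, MonotoneOn (G x) (Ici 0)) {K : ℝ≥0}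
    (hK : ∀ x, 0 < G x K) {x₀ : X} {p : ℝ} (hp : 0 ≤ p) (hpos : 0 < G x₀ p) :
    ∃ C, ∀ w, IsContSubsol G w → ∀ y, w x₀ - w y ≤ p * dist x₀ y + C * dist x₀ y ^ 2 := by
  obtain ⟨r, hr, hball⟩ := exists_ball_half_le hG hpos
  refine ⟨2 * (K + 1) / r, fun w hw y => ?_⟩
  obtain ⟨B, hB⟩ := isCompact_univ.exists_bound_of_continuousOn hw.1.continuousOn
  obtain ⟨ρ, hρ⟩ := (hw.quadSubsol hgeo).exists_sub_le hmono
    (hw.1.comp continuous_snd).continuousOn (fun _ _ => hw.lipschitzWith hgeo hK)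
    (fun _ _ x => hB x (mem_univ x)) hp hr (half_pos hpos) hball
  obtain ⟨_, _, _, hle⟩ := hρ (ρ + 1) (lt_add_one ρ) y
  exact hle

end Estimates

/-! ### Subsolutions from descent bounds -/

section Descent

theorem limsup_nonneg_of_nonneg {α : Type*} {f : Filter α} {q : α → ℝ} (hq : ∀ z, 0 ≤ q z) :
    0 ≤ limsup q f := by
  rcases f.eq_or_neBot with hbot | _
  · simp [hbot, limsup, limsSup]
  · rw [limsup_eq]
    refine Real.sInf_nonneg fun a ha => ?_
    obtain ⟨z, hz⟩ := Eventually.exists (f := f) ha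
    exact (hq z).trans hz

theorem limsup_le_of_nonneg {α : Type*} {f : Filter α} {q : α → ℝ} {K : ℝ} (hK : 0 ≤ K)
    (hq : ∀ z, 0 ≤ q z) (hle : ∀ᶠ z in f, q z ≤ K) : limsup q f ≤ K := by
  rcases f.eq_or_neBot with hbot | _
  · simpa [hbot, limsup, limsSup] using hK
  · exact limsup_le_of_le (isBoundedUnder_of ⟨0, hq⟩ :
      f.IsBoundedUnder (· ≥ ·) q).isCoboundedUnder_le hle

theorem mslope_nonneg (ψ : X → ℝ) (x : X) : 0 ≤ mslope ψ x :=
  limsup_nonneg_of_nonneg fun _ => by positivity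

theorem mslopeDown_nonneg (ψ : X → ℝ) (x : X) : 0 ≤ mslopeDown ψ x :=
  limsup_nonneg_of_nonneg fun _ => by positivity

theorem LocLipOn.eventually_quotient_le {ψ : X → ℝ} (hψ : LocLipOn univ ψ) (x : X) :
    ∃ K : ℝ≥0, ∀ᶠ z in 𝓝 x, ∀ᶠ y in 𝓝[≠] z, |ψ y - ψ z| / dist y z ≤ K := by
  obtain ⟨K, t, ht, hK⟩ := hψ x (mem_univ x)
  rw [nhdsWithin_univ] at ht
  refine ⟨K, ?_⟩
  filter_upwards [eventually_mem_nhds_iff.2 ht] with z hz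
  filter_upwards [nhdsWithin_le_nhds hz] with y hy
  refine div_le_of_le_mul₀ dist_nonneg K.2 ?_
  rw [← Real.dist_eq]
  exact hK.dist_le_mul y hy z (mem_of_mem_nhds hz)

theorem mslope_le_uscEnvR {ψ : X → ℝ} (hψ : LocLipOn univ ψ) (x : X) :
    mslope ψ x ≤ uscEnvR univ (mslope ψ) x := by
  obtain ⟨K, hK⟩ := hψ.eventually_quotient_le x
  rw [uscEnvR, nhdsWithin_univ]
  exact le_limsup_of_frequently_le (fun h => h.self_of_nhds le_rfl)
    ⟨K, eventually_map.2 (hK.mono fun z hz =>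
      limsup_le_of_nonneg K.2 (fun _ => by positivity) hz)⟩

theorem mslopeDown_le_add_mslope {ψ₁ ψ₂ w : X → ℝ} (hψ₂ : LocLipOn univ ψ₂) {x : X} {p C : ℝ}
    (hp : 0 ≤ p) (hw : ∀ y, w x - w y ≤ p * dist x y + C * dist x y ^ 2)
    (heq : w x = ψ₁ x + ψ₂ x) (hle : ∀ᶠ y in 𝓝 x, w y ≤ ψ₁ y + ψ₂ y) :
    mslopeDown ψ₁ x ≤ p + mslope ψ₂ x := by
  refine le_of_forall_pos_le_add_mul (k := 2) fun ε hε => ?_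
  obtain ⟨K, hK⟩ := hψ₂.eventually_quotient_le x
  have hslope₂ : ∀ᶠ y in 𝓝[≠] x, |ψ₂ y - ψ₂ x| / dist y x < mslope ψ₂ x + ε :=
    eventually_lt_of_limsup_lt (lt_add_of_pos_right _ hε) ⟨K, eventually_map.2 hK.self_of_nhds⟩
  have hsmall : ∀ᶠ y in 𝓝[≠] x, C * dist y x < ε := by
    have hcts : Continuous fun y => C * dist y x := by fun_prop
    exact nhdsWithin_le_nhds (hcts.continuousAt.eventually (gt_mem_nhds (by simpa using hε)))
  have hslope := mslope_nonneg ψ₂ x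
  refine limsup_le_of_nonneg (by positivity) (fun y => by positivity) ?_
  filter_upwards [hslope₂, hsmall, nhdsWithin_le_nhds hle, self_mem_nhdsWithin]
    with y hψ₂y hCy hwy hyx
  have hd : 0 < dist y x := dist_pos.2 hyx
  rw [div_lt_iff₀ hd] at hψ₂y
  refine div_le_of_le_mul₀ dist_nonneg (by positivity) (max_le ?_ (by positivity))
  calc ψ₁ x - ψ₁ y ≤ (w x - w y) + (ψ₂ y - ψ₂ x) := by linarith
    _ ≤ (p * dist y x + C * dist y x ^ 2) + |ψ₂ y - ψ₂ x| := by
      rw [dist_comm y x]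
      exact add_le_add (hw y) (le_abs_self _)
    _ ≤ (p * dist y x + ε * dist y x) + (mslope ψ₂ x + ε) * dist y x := by
      have hCd := mul_le_mul_of_nonneg_right hCy.le hd.le
      linarith
    _ = (p + mslope ψ₂ x + ε * 2) * dist y x := by ring

variable {G : X → ℝ → ℝ}

theorem Hr_neg_le {Y : Type*} {H : Y → ℝ → ℝ} {x : Y} (hH : Continuous (H x)) {r p : ℝ}
    (hr : 0 ≤ r) (hp : 0 ≤ p) : Hr H (-r) x p ≤ H x (max (p - r) 0) := by
  rcases hr.eq_or_lt with rfl | hr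
  · rw [neg_zero, Hr_zero_left, sub_zero, max_eq_left hp]
  rw [Hr, if_neg (by linarith)]
  refine csInf_le (isCompact_Icc.image (by fun_prop)).bddBelow
    ⟨min 1 (p / r), ⟨by linarith [le_min zero_le_one (div_nonneg hp hr.le)], min_le_left _ _⟩, ?_⟩
  have hmin : r * min 1 (p / r) = min r p := by
    rw [mul_min_of_nonneg _ _ hr.le, mul_one, mul_div_cancel₀ _ hr.ne']
  change H x (p + -r * min 1 (p / r)) = _
  rw [neg_mul, hmin, ← sub_eq_add_neg, ← max_sub_sub_left, sub_self]

theorem nonpos_of_forall_pos_le {g : ℝ → ℝ} (hg : Continuous g) (h0 : g 0 ≤ 0) {q : ℝ}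
    (hq : 0 ≤ q) (h : ∀ p ≥ 0, 0 < g p → q ≤ p) : g q ≤ 0 := by
  by_contra! hpos
  have hq' : 0 < q := hq.lt_of_ne fun hq0 => by rw [← hq0] at hpos; exact hpos.not_ge h0
  have hpos_near : ∀ᶠ p in 𝓝[<] q, 0 < g p :=
    nhdsWithin_le_nhds (hg.continuousAt.eventually (lt_mem_nhds hpos))
  obtain ⟨p, hp, hpq⟩ := (hpos_near.and (Ioo_mem_nhdsLT hq')).exists
  exact hpq.2.not_ge (h p hpq.1.le hp)

/-- The descent slope of `w` at `x` is at most `p`, up to a quadratic error, whenever `p ≥ 0`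
satisfies `G(x,p) > 0`: a pointwise form of the stationary subsolution property which passes to
large-time limits and to the infimum defining the profile. -/
def DescentBound (G : X → ℝ → ℝ) (w : X → ℝ) : Prop :=
  ∀ x, ∀ p ≥ 0, 0 < G x p → ∃ C, ∀ y, w x - w y ≤ p * dist x y + C * dist x y ^ 2

theorem DescentBound.isContSubsol {w : X → ℝ} (hw : DescentBound G w) (hcont : Continuous w)
    (hG : ∀ x, Continuous (G x)) (hG0 : ∀ x, G x 0 ≤ 0) : IsContSubsol G w := by
  refine ⟨hcont, ?_⟩
  rintro ψ₁ ψ₂ ⟨-, hdown, -⟩ hψ₂ x - ⟨R, hR, heq, hle⟩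
  simp only [uscEnv_coe hcont.continuousOn (mem_univ _), EReal.coe_le_coe_iff,
    EReal.coe_eq_coe_iff, inter_univ] at heq hle
  rw [← hdown (mem_univ x)]
  have hr := mslope_le_uscEnvR hψ₂ x
  refine (Hr_neg_le (hG x) ((mslope_nonneg ψ₂ x).trans hr) (mslopeDown_nonneg ψ₁ x)).trans
    (nonpos_of_forall_pos_le (hG x) (hG0 x) (le_max_right _ _) fun p hp hpos => max_le ?_ hp)
  obtain ⟨C, hC⟩ := hw x p hp hpos
  linarith [mslopeDown_le_add_mslope hψ₂ hp hC heq
    (Filter.Eventually.mono (ball_mem_nhds x hR) hle)]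

end Descent

/-! ### The critical distance and the profile -/

section Profile

variable {G : X → ℝ → ℝ} {K : ℝ≥0} {w : X → ℝ}

theorem DescentBound.sub_const (hw : DescentBound G w) (m : ℝ) :
    DescentBound G fun x => w x - m := fun x p hp hpos => by
  simpa only [sub_sub_sub_cancel_right] using hw x p hp hpos

theorem descentBound_zero (G : X → ℝ → ℝ) : DescentBound G fun _ => 0 := fun x p hp _ =>
  ⟨0, fun y => by linarith [mul_nonneg hp (dist_nonneg (x := x) (y := y))]⟩

/-- The critical distance `S(x,y)` of the equation `G(x,|Dw|) = 0`: the largest value at `x` of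
a continuous stationary subsolution vanishing at `y`. -/
def critDist (G : X → ℝ → ℝ) (x y : X) : ℝ :=
  sSup {r | ∃ w : X → ℝ, IsContSubsol G w ∧ w y = 0 ∧ r = w x}

theorem exists_isContSubsol_eq_zero (hG : ∀ x, Continuous (G x)) (hG0 : ∀ x, G x 0 ≤ 0) (x y : X) :
    {r | ∃ w : X → ℝ, IsContSubsol G w ∧ w y = 0 ∧ r = w x}.Nonempty :=
  ⟨0, _, (descentBound_zero G).isContSubsol continuous_const hG hG0, rfl, rfl⟩

theorem critDist_self_le (hG : ∀ x, Continuous (G x)) (hG0 : ∀ x, G x 0 ≤ 0) (x : X) :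
    critDist G x x ≤ 0 := by
  refine csSup_le (exists_isContSubsol_eq_zero hG hG0 x x) ?_
  rintro _ ⟨w, -, hx, rfl⟩
  exact hx.le

/-- The function `φ₋`: the infimum of `v` over all times. -/
def timeInf {Y : Type*} (v : ℝ → Y → ℝ) (x : Y) : ℝ :=
  sInf {r | ∃ t, 0 ≤ t ∧ r = v t x}

theorem timeInf_le {Y : Type*} {v : ℝ → Y → ℝ} {m t : ℝ} {x : Y} (hm : ∀ t ≥ 0, m ≤ v t x)
    (ht : 0 ≤ t) : timeInf v x ≤ v t x := by
  refine csInf_le ⟨m, ?_⟩ ⟨t, ht, rfl⟩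
  rintro _ ⟨s, hs, rfl⟩
  exact hm s hs

theorem le_timeInf {Y : Type*} {v : ℝ → Y → ℝ} {m : ℝ} {x : Y} (hm : ∀ t ≥ 0, m ≤ v t x) :
    m ≤ timeInf v x := by
  refine le_csInf ⟨_, 0, le_rfl, rfl⟩ ?_
  rintro _ ⟨t, ht, rfl⟩
  exact hm t ht

/-- The profile `φ∞` generated by boundary values `ψ` on the zero set of `G(·,0)`. -/
def profile (G : X → ℝ → ℝ) (ψ : X → ℝ) (x : X) : ℝ :=
  sInf {r | ∃ y, G y 0 = 0 ∧ r = critDist G x y + ψ y}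

theorem le_profile {ψ : X → ℝ} {m : ℝ} {x : X} (hA : ∃ a, G a 0 = 0)
    (hm : ∀ y, G y 0 = 0 → m ≤ critDist G x y + ψ y) : m ≤ profile G ψ x := by
  obtain ⟨a, ha⟩ := hA
  refine le_csInf ⟨_, a, ha, rfl⟩ ?_
  rintro _ ⟨y, hy, rfl⟩
  exact hm y hy

variable [CompactSpace X]

theorem le_critDist (hgeo : IsGeodesicSpace X) (hK : ∀ x, 0 < G x K) (hw : IsContSubsol G w)
    (x : X) {y : X} (hy : w y = 0) : w x ≤ critDist G x y := by
  refine le_csSup ⟨K * dist x y, ?_⟩ ⟨w, hw, hy, rfl⟩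
  rintro _ ⟨w', hw', hy', rfl⟩
  simpa [hy'] using (hw'.lipschitzWith hgeo hK).le_add_mul x y

theorem DescentBound.sub_le_critDist (hgeo : IsGeodesicSpace X) (hG : ∀ x, Continuous (G x))
    (hG0 : ∀ x, G x 0 ≤ 0) (hK : ∀ x, 0 < G x K) (hw : DescentBound G w) (hcont : Continuous w)
    (x y : X) : w x - w y ≤ critDist G x y :=
  le_critDist hgeo hK ((hw.sub_const (w y)).isContSubsol (hcont.sub continuous_const) hG hG0) x
    (sub_self _)

theorem critDist_nonneg (hgeo : IsGeodesicSpace X) (hG : ∀ x, Continuous (G x))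
    (hG0 : ∀ x, G x 0 ≤ 0) (hK : ∀ x, 0 < G x K) (x y : X) : 0 ≤ critDist G x y := by
  simpa using (descentBound_zero G).sub_le_critDist hgeo hG hG0 hK continuous_const x y

theorem critDist_le_add (hgeo : IsGeodesicSpace X) (hG : ∀ x, Continuous (G x))
    (hG0 : ∀ x, G x 0 ≤ 0) (hK : ∀ x, 0 < G x K) {x z : X} {D : ℝ}
    (hD : ∀ w, IsContSubsol G w → w x - w z ≤ D) (y : X) :
    critDist G x y ≤ critDist G z y + D := by
  refine csSup_le (exists_isContSubsol_eq_zero hG hG0 x y) ?_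
  rintro _ ⟨w, hw, hy, rfl⟩
  linarith [hD w hw, le_critDist hgeo hK hw z hy]

theorem profile_le (hgeo : IsGeodesicSpace X) (hG : ∀ x, Continuous (G x))
    (hG0 : ∀ x, G x 0 ≤ 0) (hK : ∀ x, 0 < G x K) {ψ : X → ℝ} (hψ : BddBelow (range ψ)) (x : X)
    {y : X} (hy : G y 0 = 0) : profile G ψ x ≤ critDist G x y + ψ y := by
  obtain ⟨m, hm⟩ := hψ
  refine csInf_le ⟨m, ?_⟩ ⟨y, hy, rfl⟩
  rintro _ ⟨z, -, rfl⟩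
  linarith [critDist_nonneg hgeo hG hG0 hK x z, hm (mem_range_self z)]

theorem profile_le_of_apply_eq_zero (hgeo : IsGeodesicSpace X) (hG : ∀ x, Continuous (G x))
    (hG0 : ∀ x, G x 0 ≤ 0) (hK : ∀ x, 0 < G x K) {ψ : X → ℝ} (hψ : BddBelow (range ψ)) {a : X}
    (ha : G a 0 = 0) : profile G ψ a ≤ ψ a := by
  linarith [profile_le hgeo hG hG0 hK hψ a ha, critDist_self_le hG hG0 a]

theorem profile_sub_le (hgeo : IsGeodesicSpace X) (hG : ∀ x, Continuous (G x))
    (hG0 : ∀ x, G x 0 ≤ 0) (hK : ∀ x, 0 < G x K) (hA : ∃ a, G a 0 = 0) {ψ : X → ℝ}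
    (hψ : BddBelow (range ψ)) {x y : X} {D : ℝ} (hD : ∀ w, IsContSubsol G w → w x - w y ≤ D) :
    profile G ψ x - profile G ψ y ≤ D := by
  rw [sub_le_comm]
  refine le_profile hA fun z hz => ?_
  linarith [profile_le hgeo hG hG0 hK hψ x hz, critDist_le_add hgeo hG hG0 hK hD z]

theorem isContSubsol_profile (hgeo : IsGeodesicSpace X) (hG : Continuous (Function.uncurry G))
    (hG0 : ∀ x, G x 0 ≤ 0) (hmono : ∀ x, MonotoneOn (G x) (Ici 0)) (hK : ∀ x, 0 < G x K)
    (hA : ∃ a, G a 0 = 0) {ψ : X → ℝ} (hψ : BddBelow (range ψ)) :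
    IsContSubsol G (profile G ψ) := by
  have hlip : LipschitzWith K (profile G ψ) := LipschitzWith.of_le_add_mul K fun x y =>
    sub_le_iff_le_add'.1 <| profile_sub_le hgeo hG.uncurry_left hG0 hK hA hψ fun w hw =>
      sub_le_iff_le_add'.2 <| (hw.lipschitzWith hgeo hK).le_add_mul x y
  have hdescent : DescentBound G (profile G ψ) := fun x p hp hpos => by
    obtain ⟨C, hC⟩ := exists_isContSubsol_sub_le hgeo hG hmono hK hp hpos
    exact ⟨C, fun y => profile_sub_le hgeo hG.uncurry_left hG0 hK hA hψ fun w hw => hC w hw y⟩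
  exact hdescent.isContSubsol hlip.continuous hG.uncurry_left hG0

end Profile

/-! ### Upper and lower bounds for large times -/

section LargeTime

theorem limsup_le_limsup_add {f g : ℝ → ℝ} {B D ρ : ℝ} (hf : ∀ t ≥ 0, |f t| ≤ B)
    (hg : ∀ t ≥ 0, |g t| ≤ B) (h : ∀ t₀ > ρ, ∃ t₁, t₀ - ρ ≤ t₁ ∧ f t₀ - g t₁ ≤ D) :
    limsup f atTop ≤ limsup g atTop + D := by
  have hgb : IsBoundedUnder (· ≤ ·) atTop g := ⟨B, eventually_map.2
    ((eventually_ge_atTop 0).mono fun t ht => (abs_le.1 (hg t ht)).2)⟩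
  have hfb : IsBoundedUnder (· ≥ ·) atTop f := ⟨-B, eventually_map.2
    ((eventually_ge_atTop 0).mono fun t ht => (abs_le.1 (hf t ht)).1)⟩
  refine le_of_forall_pos_le_add fun ε hε => ?_
  obtain ⟨T, hT⟩ := eventually_atTop.1
    (eventually_lt_of_limsup_lt (lt_add_of_pos_right (limsup g atTop) hε) hgb)
  refine limsup_le_of_le hfb.isCoboundedUnder_le ?_
  filter_upwards [eventually_gt_atTop ρ, eventually_ge_atTop (T + ρ)] with t hρ hTρ
  obtain ⟨t₁, ht₁, hle⟩ := h t hρ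
  linarith [hT t₁ (by linarith)]

variable {G : X → ℝ → ℝ} {v : ℝ → X → ℝ} {M K : ℝ≥0} {B : ℝ}

theorem lipschitzWith_limsup (hlip : ∀ t ≥ 0, LipschitzWith M (v t))
    (hB : ∀ t ≥ 0, ∀ x, |v t x| ≤ B) : LipschitzWith M fun x => limsup (fun t => v t x) atTop :=
  LipschitzWith.of_le_add_mul M fun x y => limsup_le_limsup_add (ρ := 0)
    (fun t ht => hB t ht x) (fun t ht => hB t ht y) fun t ht =>
      ⟨t, (sub_zero t).le, sub_le_iff_le_add'.2 ((hlip t (le_of_lt ht)).le_add_mul x y)⟩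

theorem lipschitzWith_mul_of_le_one {φ : X → ℝ} (hφ : LipschitzWith K φ) {θ : ℝ} (hθ : 0 ≤ θ)
    (hθ1 : θ ≤ 1) : LipschitzWith K fun x => θ * φ x :=
  LipschitzWith.of_le_add_mul K fun x y => by
    have hle := mul_le_mul_of_nonneg_left (hφ.le_add_mul x y) hθ
    have hK := mul_le_of_le_one_left (mul_nonneg K.coe_nonneg (dist_nonneg (x := x) (y := y))) hθ1
    linarith

theorem IsContSubsol.apply_le_of_isMax_mul (hgeo : IsGeodesicSpace X)
    {φ : X → ℝ} (hφ : IsContSubsol G φ)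
    (hstar : ∀ x θ p, 0 ≤ θ → θ ≤ 1 → 0 ≤ p → G x (θ * p) ≤ θ * G x p + (1 - θ) * G x 0)
    {θ E : ℝ} {x₁ y : X} (hθ : 0 < θ) (hθ1 : θ ≤ 1) (hE : 0 ≤ E)
    (hmax : ∀ x, θ * φ x - E * dist x y ^ 2 ≤ θ * φ x₁ - E * dist x₁ y ^ 2) :
    G x₁ (2 * E * dist x₁ y) ≤ (1 - θ) * G x₁ 0 := by
  have hvisc := hφ.apply_le_zero hgeo (α := E / θ) (x₀ := x₁) (y := y) (by positivity) fun x => by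
    refine le_of_mul_le_mul_left ?_ hθ
    rw [mul_add, ← mul_assoc, mul_div_cancel₀ _ hθ.ne']
    linarith [hmax x]
  calc G x₁ (2 * E * dist x₁ y) = G x₁ (θ * (2 * (E / θ) * dist x₁ y)) := by
        congr 1
        field_simp
    _ ≤ θ * G x₁ (2 * (E / θ) * dist x₁ y) + (1 - θ) * G x₁ 0 :=
        hstar _ _ _ hθ.le hθ1 (by positivity)
    _ ≤ (1 - θ) * G x₁ 0 := add_le_of_nonpos_left (mul_nonpos_of_nonneg_of_nonpos hθ.le hvisc)

theorem QuadSupersol.neg_lt_apply_of_isMax (hsup : QuadSupersol G v)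
    {t₀ t₁ γ η E : ℝ} {x₁ y₁ : X} (ht₁ : 0 < t₁) (hE : 0 ≤ E) (hγ : |2 * γ * (t₁ - t₀)| < η)
    (hmax : ∀ t ≥ 0, ∀ y, -E * dist x₁ y ^ 2 - v t y - γ * (t - t₀) ^ 2
      ≤ -E * dist x₁ y₁ ^ 2 - v t₁ y₁ - γ * (t₁ - t₀) ^ 2) :
    -η < G y₁ (2 * E * dist x₁ y₁) := by
  have hvisc := hsup 0 t₁ y₁ x₁ E (-(2 * γ * (t₁ - t₀))) (-γ) le_rfl ht₁ hE fun t ht y => by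
    have hle := hmax t ht y
    rw [dist_comm x₁ y, dist_comm x₁ y₁] at hle
    linarith
  rw [dist_comm y₁ x₁] at hvisc
  linarith [(abs_lt.1 hγ).1]

theorem QuadSupersol.dist_lt_and_lt_of_isMax (hgeo : IsGeodesicSpace X) (hsup : QuadSupersol G v)
    (hstar : ∀ x θ p, 0 ≤ θ → θ ≤ 1 → 0 ≤ p → G x (θ * p) ≤ θ * G x p + (1 - θ) * G x 0)
    {φ : X → ℝ} (hφ : IsContSubsol G φ) (hφlip : LipschitzWith K φ)
    {θ t₀ t₁ γ η E d : ℝ} {x₁ y₁ : X} (hθ : 0 < θ) (hθ1 : θ < 1) (ht₁ : 0 < t₁) (hE : 0 < E)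
    (hKE : K < E * d) (hγ : |2 * γ * (t₁ - t₀)| < η)
    (huc : ∀ p ∈ Icc (0 : ℝ) (2 * K), ∀ x y, dist x y < d → G y p < G x p + η)
    (hmax : ∀ t ≥ 0, ∀ x y, θ * φ x - E * dist x y ^ 2 - v t y - γ * (t - t₀) ^ 2
      ≤ θ * φ x₁ - E * dist x₁ y₁ ^ 2 - v t₁ y₁ - γ * (t₁ - t₀) ^ 2) :
    dist x₁ y₁ < d ∧ -(2 * η) < (1 - θ) * G x₁ 0 := by
  have hEd : E * dist x₁ y₁ ≤ K := by
    refine mul_dist_le_of_lipschitzWith (lipschitzWith_mul_of_le_one hφlip hθ.le hθ1.le) ?_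
    have hle := hmax t₁ ht₁.le y₁ y₁
    rw [dist_self] at hle
    linarith
  have hd : dist x₁ y₁ < d := lt_of_mul_lt_mul_left (hEd.trans_lt hKE) hE.le
  refine ⟨hd, ?_⟩
  have hsub₁ := hφ.apply_le_of_isMax_mul hgeo hstar hθ hθ1.le hE.le fun x => by
    linarith [hmax t₁ ht₁.le x y₁]
  have hsup₁ := hsup.neg_lt_apply_of_isMax ht₁ hE.le hγ fun t ht y => by
    linarith [hmax t ht x₁ y]
  linarith [huc (2 * E * dist x₁ y₁) ⟨by positivity, by linarith⟩ x₁ y₁ hd]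

variable [CompactSpace X]

theorem QuadSubsol.descentBound_limsup (hsub : QuadSubsol G v)
    (hG : Continuous (Function.uncurry G)) (hmono : ∀ x, MonotoneOn (G x) (Ici 0))
    (hcont : ContinuousOn (Function.uncurry v) (Ici 0 ×ˢ univ))
    (hlip : ∀ t ≥ 0, LipschitzWith M (v t)) (hB : ∀ t ≥ 0, ∀ x, |v t x| ≤ B) :
    DescentBound G fun x => limsup (fun t => v t x) atTop := fun x p hp hpos => by
  obtain ⟨r, hr, hball⟩ := exists_ball_half_le hG hpos
  obtain ⟨ρ, hρ⟩ := hsub.exists_sub_le hmono hcont hlip hB hp hr (half_pos hpos) hball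
  refine ⟨2 * (M + 1) / r, fun y => sub_le_iff_le_add'.2 <|
    limsup_le_limsup_add (ρ := ρ) (fun t ht => hB t ht x) (fun t ht => hB t ht y) fun t ht => ?_⟩
  obtain ⟨t₁, -, ht₁, hle⟩ := hρ t ht y
  exact ⟨t₁, ht₁, hle⟩

theorem QuadSubsol.limsup_le_profile (hgeo : IsGeodesicSpace X) (hsub : QuadSubsol G v)
    (hG : Continuous (Function.uncurry G)) (hG0 : ∀ x, G x 0 ≤ 0)
    (hmono : ∀ x, MonotoneOn (G x) (Ici 0)) (hK : ∀ x, 0 < G x K) (hA : ∃ a, G a 0 = 0)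
    (hcont : ContinuousOn (Function.uncurry v) (Ici 0 ×ˢ univ))
    (hlip : ∀ t ≥ 0, LipschitzWith M (v t)) (hB : ∀ t ≥ 0, ∀ x, |v t x| ≤ B) (x : X) :
    limsup (fun t => v t x) atTop ≤ profile G (timeInf v) x := by
  refine le_profile hA fun a ha => ?_
  have hdescent := (hsub.descentBound_limsup hG hmono hcont hlip hB).sub_le_critDist hgeo
    hG.uncurry_left hG0 hK (lipschitzWith_limsup hlip hB).continuous x a
  have hanti := hsub.antitoneOn hG hmono hcont hlip (a := B) (b := 0)
    (fun t ht y => by linarith [(abs_le.1 (hB t ht y)).2]) ha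
  have hbdd : IsBoundedUnder (· ≥ ·) atTop fun t => v t a := ⟨-B, eventually_map.2
    ((eventually_ge_atTop 0).mono fun t ht => (abs_le.1 (hB t ht a)).1)⟩
  have hzero : limsup (fun t => v t a) atTop ≤ timeInf v a := le_timeInf fun s hs =>
    limsup_le_of_le hbdd.isCoboundedUnder_le
      ((eventually_ge_atTop s).mono fun t ht => hanti hs (hs.trans ht) ht)
  linarith

theorem exists_pos_forall_exists_dist_lt {g : X → ℝ} (hg : Continuous g) (hg0 : ∀ x, g x ≤ 0)
    {d : ℝ} (hd : 0 < d) : ∃ κ > 0, ∀ x, -κ < g x → ∃ a, g a = 0 ∧ dist x a < d := by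
  by_contra! hcon
  have hclosed : IsClosed {x | ∀ a, g a = 0 → d ≤ dist x a} := by
    simp only [ofPred_forall]
    exact isClosed_iInter fun a => isClosed_iInter fun _ =>
      isClosed_le continuous_const (by fun_prop)
  obtain ⟨x', -, hx'⟩ := hcon 1 one_pos
  obtain ⟨z, hz, hmax⟩ := hclosed.isCompact.exists_isMaxOn ⟨x', hx'⟩ hg.continuousOn
  have hzneg : g z < 0 := (hg0 z).lt_of_ne fun hz0 => by
    have hdz := hz z hz0
    rw [dist_self] at hdz
    exact hd.not_ge hdz
  obtain ⟨x, hzx, hx⟩ := hcon (-g z) (neg_pos.2 hzneg)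
  rw [neg_neg] at hzx
  exact hzx.not_ge (hmax hx)

theorem exists_pos_forall_dist_lt (hG : Continuous (Function.uncurry G)) (R : ℝ) {η : ℝ}
    (hη : 0 < η) : ∃ d > 0, ∀ p ∈ Icc 0 R, ∀ x y, dist x y < d → G y p < G x p + η := by
  have hcompact : IsCompact ((univ : Set X) ×ˢ Icc (0 : ℝ) R) := isCompact_univ.prod isCompact_Icc
  have huc := hcompact.uniformContinuousOn_of_continuous hG.continuousOn
  obtain ⟨d, hd, hdist⟩ := Metric.uniformContinuousOn_iff.1 huc η hη
  refine ⟨d, hd, fun p hp x y hxy => ?_⟩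
  have hlt := hdist (x, p) ⟨trivial, hp⟩ (y, p) ⟨trivial, hp⟩ (by rwa [dist_prod_same_right])
  rw [Real.dist_eq, Function.uncurry_apply_pair, Function.uncurry_apply_pair] at hlt
  linarith [(abs_lt.1 hlt).1]

-- The strict inequality `G(x, θ|Dφ|) ≤ (1 - θ) G(x, 0) < 0` off the zero set of `G(·,0)` pushes
-- the maximum in the doubling of variables towards that set.
theorem QuadSupersol.exists_doubling_max [Nonempty X] (hgeo : IsGeodesicSpace X)
    (hsup : QuadSupersol G v) (hG : Continuous (Function.uncurry G)) (hG0 : ∀ x, G x 0 ≤ 0)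
    (hstar : ∀ x θ p, 0 ≤ θ → θ ≤ 1 → 0 ≤ p → G x (θ * p) ≤ θ * G x p + (1 - θ) * G x 0)
    (hcont : ContinuousOn (Function.uncurry v) (Ici 0 ×ˢ univ)) (hB : ∀ t ≥ 0, ∀ x, |v t x| ≤ B)
    {φ : X → ℝ} (hφ : IsContSubsol G φ)
    (hφlip : LipschitzWith K φ) {θ d₀ : ℝ} (hθ : 0 < θ) (hθ1 : θ < 1) (hd₀ : 0 < d₀) :
    ∃ T, ∀ t₀ ≥ T, ∃ t₁ ≥ 0, ∃ x₁ y₁ a, G a 0 = 0 ∧ dist x₁ a < d₀ ∧ dist x₁ y₁ < d₀ ∧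
      ∀ x, θ * φ x - v t₀ x ≤ θ * φ x₁ - v t₁ y₁ := by
  have hB0 : 0 ≤ B := (abs_nonneg _).trans (hB 0 le_rfl (Classical.arbitrary X))
  obtain ⟨κ, hκ, hnear⟩ := exists_pos_forall_exists_dist_lt (hG.uncurry_right 0) hG0 hd₀
  have hη : 0 < (1 - θ) * κ / 2 := half_pos (mul_pos (sub_pos.2 hθ1) hκ)
  obtain ⟨d₁, hd₁, huc⟩ := exists_pos_forall_dist_lt hG (2 * K) hη
  have hmin : 0 < min d₀ d₁ := lt_min hd₀ hd₁
  obtain ⟨E, hE, hKE⟩ : ∃ E > 0, K < E * min d₀ d₁ :=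
    ⟨(K + 1) / min d₀ d₁, by positivity, by rw [div_mul_cancel₀ _ hmin.ne']; exact lt_add_one _⟩
  obtain ⟨ρ, hρ, γ, hγ, hexists⟩ := exists_isMax_sub_sq_of_osc_le (X × X)
    (mul_nonneg zero_le_two hB0) hη
  refine ⟨ρ, fun t₀ ht₀ => ?_⟩
  have hφcont : Continuous φ := hφ.1
  obtain ⟨t₁, ht₁, ⟨x₁, y₁⟩, hρt, hγt, hmax⟩ := hexists
    (fun z => θ * φ z.2.1 - E * dist z.2.1 z.2.2 ^ 2 - v z.1 z.2.2)
    (ContinuousOn.sub (by fun_prop) (hcont.comp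
      (f := fun z : ℝ × (X × X) => (z.1, z.2.2)) (by fun_prop) fun z hz => ⟨hz.1, trivial⟩))
    (fun t ht t' ht' z => by linarith [(abs_le.1 (hB t ht z.2)).1, (abs_le.1 (hB t' ht' z.2)).2])
    t₀ (hρ.le.trans ht₀)
  simp only [Prod.forall] at hmax
  have ht₁0 : 0 < t₁ := by linarith [(abs_lt.1 hρt).1]
  obtain ⟨hd, hlt⟩ := hsup.dist_lt_and_lt_of_isMax hgeo hstar hφ hφlip hθ hθ1 ht₁0 hE hKE hγt
    (fun p hp x y hxy => huc p hp x y (hxy.trans_le (min_le_right _ _))) hmax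
  obtain ⟨a, ha, hxa⟩ := hnear x₁ (lt_of_mul_lt_mul_left (by linarith) (sub_pos.2 hθ1).le)
  refine ⟨t₁, ht₁, x₁, y₁, a, ha, hxa, hd.trans_le (min_le_left _ _), fun x => ?_⟩
  have hle := hmax t₀ (hρ.le.trans ht₀) x x
  have hnonneg : 0 ≤ E * dist x₁ y₁ ^ 2 + γ * (t₁ - t₀) ^ 2 := by positivity
  simp only [dist_self, sub_self] at hle
  linarith

theorem QuadSupersol.exists_forall_sub_le [Nonempty X] (hgeo : IsGeodesicSpace X)
    (hsup : QuadSupersol G v) (hG : Continuous (Function.uncurry G)) (hG0 : ∀ x, G x 0 ≤ 0)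
    (hstar : ∀ x θ p, 0 ≤ θ → θ ≤ 1 → 0 ≤ p → G x (θ * p) ≤ θ * G x p + (1 - θ) * G x 0)
    (hcont : ContinuousOn (Function.uncurry v) (Ici 0 ×ˢ univ))
    (hlip : ∀ t ≥ 0, LipschitzWith M (v t)) (hB : ∀ t ≥ 0, ∀ x, |v t x| ≤ B)
    {φ : X → ℝ} (hφ : IsContSubsol G φ) (hφlip : LipschitzWith K φ)
    (hφv : ∀ t ≥ 0, ∀ a, G a 0 = 0 → φ a ≤ v t a) {δ : ℝ} (hδ : 0 < δ) :
    ∃ T, ∀ t ≥ T, ∀ x, φ x - δ ≤ v t x := by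
  set C : ℝ := K * diam (univ : Set X) + (K + 2 * M)
  have hsmall : ∀ᶠ ε in 𝓝[>] (0 : ℝ), C * ε < δ :=
    nhdsWithin_le_nhds (((continuous_const_mul C).tendsto' 0 0 (mul_zero C)).eventually_lt_const hδ)
  obtain ⟨ε, hεδ, hε, hε1⟩ := (hsmall.and (Ioo_mem_nhdsGT one_pos)).exists
  obtain ⟨T, hT⟩ := hsup.exists_doubling_max hgeo hG hG0 hstar hcont hB hφ hφlip
    (sub_pos.2 hε1) (sub_lt_self 1 hε) hε
  refine ⟨T, fun t ht x => ?_⟩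
  obtain ⟨t₁, ht₁, x₁, y₁, a, ha, hxa, hxy, hle⟩ := hT t ht
  have hosc : ε * (φ x - φ x₁) ≤ ε * (K * diam (univ : Set X)) := by
    have hdiam := dist_le_diam_of_mem isCompact_univ.isBounded (mem_univ x) (mem_univ x₁)
    gcongr
    exact sub_le_iff_le_add'.2 <| (hφlip.le_add_mul x x₁).trans (by gcongr)
  have hφa : φ x₁ ≤ φ a + K * ε := (hφlip.le_add_mul x₁ a).trans (by gcongr)
  have hva : v t₁ a ≤ v t₁ y₁ + M * (ε + ε) := ((hlip t₁ ht₁).le_add_mul a y₁).trans <| by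
    gcongr
    exact (dist_triangle_left a y₁ x₁).trans (add_le_add hxa.le hxy.le)
  linarith [hle x, hφv t₁ ht₁ a ha]

theorem exists_abs_le_of_le_affine (hsub : QuadSubsol G v) (hsup : QuadSupersol G v)
    (hG : Continuous (Function.uncurry G)) (hG0 : ∀ x, G x 0 ≤ 0)
    (hmono : ∀ x, MonotoneOn (G x) (Ici 0)) (hA : ∃ a, G a 0 = 0)
    (hcont : ContinuousOn (Function.uncurry v) (Ici 0 ×ˢ univ))
    (hlip : ∀ t ≥ 0, LipschitzWith M (v t)) {a b : ℝ}
    (hgrowth : ∀ t ≥ 0, ∀ x, |v t x| ≤ a + b * t) : ∃ B, ∀ t ≥ 0, ∀ x, |v t x| ≤ B := by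
  obtain ⟨y, hy⟩ := hA
  have hinit : ∀ x, |v 0 x| ≤ a := by simpa using hgrowth 0 le_rfl
  have hMd : 0 ≤ M * diam (univ : Set X) := mul_nonneg M.2 diam_nonneg
  refine ⟨a + M * diam (univ : Set X), fun t ht x => abs_le.2 ⟨?_, ?_⟩⟩
  · have hlower : -a ≤ v t x := hsup.le_of_le_initial hG0 hcont
      (fun t ht x => (neg_le_abs _).trans (hgrowth t ht x))
      (fun x => (abs_le.1 (hinit x)).1) ht x
    linarith
  · have hanti := hsub.antitoneOn hG hmono hcont hlip
      (fun t ht x => (le_abs_self _).trans (hgrowth t ht x)) hy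
    calc v t x ≤ v t y + M * dist x y := (hlip t ht).le_add_mul x y
      _ ≤ v 0 y + M * diam (univ : Set X) := by
        gcongr
        · exact hanti self_mem_Ici ht ht
        · exact dist_le_diam_of_mem isCompact_univ.isBounded (mem_univ x) (mem_univ y)
      _ ≤ a + M * diam (univ : Set X) := by
        gcongr
        exact (le_abs_self _).trans (hinit y)

theorem tendsto_profile_timeInf (hgeo : IsGeodesicSpace X)
    (hG : Continuous (Function.uncurry G)) (hG0 : ∀ x, G x 0 ≤ 0)
    (hmono : ∀ x, MonotoneOn (G x) (Ici 0))
    (hstar : ∀ x θ p, 0 ≤ θ → θ ≤ 1 → 0 ≤ p → G x (θ * p) ≤ θ * G x p + (1 - θ) * G x 0)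
    (hK : ∀ x, 0 < G x K) (hA : ∃ a, G a 0 = 0) (hsub : QuadSubsol G v) (hsup : QuadSupersol G v)
    (hcont : ContinuousOn (Function.uncurry v) (Ici 0 ×ˢ univ))
    (hlip : ∀ t ≥ 0, LipschitzWith M (v t)) (hB : ∀ t ≥ 0, ∀ x, |v t x| ≤ B) (x : X) :
    Tendsto (fun t => v t x) atTop (𝓝 (profile G (timeInf v) x)) := by
  have : Nonempty X := ⟨x⟩
  have hlower : ∀ y, ∀ t ≥ 0, -B ≤ v t y := fun y t ht => (abs_le.1 (hB t ht y)).1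
  have hbdd : BddBelow (range (timeInf v)) := ⟨-B, by
    rintro _ ⟨y, rfl⟩
    exact le_timeInf (hlower y)⟩
  have hφ := isContSubsol_profile hgeo hG hG0 hmono hK hA hbdd
  have hφv : ∀ t ≥ 0, ∀ a, G a 0 = 0 → profile G (timeInf v) a ≤ v t a := fun t ht a ha =>
    (profile_le_of_apply_eq_zero hgeo hG.uncurry_left hG0 hK hbdd ha).trans
      (timeInf_le (hlower a) ht)
  refine tendsto_order.2 ⟨fun b hb => ?_, fun b hb => ?_⟩
  · obtain ⟨T, hT⟩ := hsup.exists_forall_sub_le hgeo hG hG0 hstar hcont hlip hB hφ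
      (hφ.lipschitzWith hgeo hK) hφv (half_pos (sub_pos.2 hb))
    filter_upwards [eventually_ge_atTop T] with t ht
    linarith [hT t ht x]
  · have hlimsup := hsub.limsup_le_profile hgeo hG hG0 hmono hK hA hcont hlip hB x
    exact eventually_lt_of_limsup_lt (hlimsup.trans_lt hb) ⟨B, eventually_map.2
      ((eventually_ge_atTop 0).mono fun t ht => (abs_le.1 (hB t ht x)).2)⟩

end LargeTime

/-! ### Lipschitz viscosity solutions -/

section Solution

theorem monotoneOn_Ici_of_convexOn_of_even {h : ℝ → ℝ} (hconv : ConvexOn ℝ univ h)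
    (heven : ∀ p, h p = h |p|) : MonotoneOn h (Ici 0) := fun p hp q _ hpq => by
  have hle := hconv.le_max_of_mem_Icc (mem_univ (-q)) (mem_univ q)
    ⟨(neg_nonpos.2 (hp.trans hpq)).trans hp, hpq⟩
  rwa [heven (-q), abs_neg, ← heven q, max_self] at hle

theorem apply_mul_le_of_convexOn {h : ℝ → ℝ} (hconv : ConvexOn ℝ univ h) {θ : ℝ} (hθ : 0 ≤ θ)
    (hθ1 : θ ≤ 1) (p : ℝ) : h (θ * p) ≤ θ * h p + (1 - θ) * h 0 := by
  simpa using hconv.2 (mem_univ p) (mem_univ 0) hθ (sub_nonneg.2 hθ1) (add_sub_cancel θ 1)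

variable {H : X → ℝ → ℝ} {u : ℝ × X → ℝ} {c : ℝ} {K M : ℝ≥0}

theorem lipschitzWith_add_mul_of_lipschitzOnWith (hu : LipschitzOnWith M u (Ici 0 ×ˢ univ)) (c : ℝ)
    {t : ℝ} (ht : 0 ≤ t) : LipschitzWith M fun x => u (t, x) + c * t :=
  LipschitzWith.of_dist_le_mul fun x y => by
    simpa only [dist_add_right, dist_prod_same_left] using
      hu.dist_le_mul (t, x) ⟨ht, trivial⟩ (t, y) ⟨ht, trivial⟩

variable [CompactSpace X]

theorem exists_abs_add_mul_le_affine (hu : LipschitzOnWith M u (Ici 0 ×ˢ univ)) (c : ℝ) :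
    ∃ a b, ∀ t ≥ 0, ∀ x, |u (t, x) + c * t| ≤ a + b * t := by
  obtain ⟨a, ha⟩ := isCompact_univ.exists_bound_of_continuousOn
    (lipschitzWith_add_mul_of_lipschitzOnWith hu 0 le_rfl).continuous.continuousOn
  refine ⟨a, M + |c|, fun t ht x => ?_⟩
  have hinit : |u (0, x)| ≤ a := by simpa using ha x trivial
  have htime := hu.dist_le_mul (t, x) ⟨ht, trivial⟩ (0, x) ⟨self_mem_Ici, trivial⟩
  rw [dist_prod_same_right, Real.dist_eq, Real.dist_eq, sub_zero, abs_of_nonneg ht] at htime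
  have htri := abs_add_three (u (t, x) - u (0, x)) (u (0, x)) (c * t)
  rw [sub_add_cancel, abs_mul c t, abs_of_nonneg ht] at htri
  linarith

theorem IsSol.tendsto_profile (hgeo : IsGeodesicSpace X) (hH : Continuous (Function.uncurry H))
    (hmono : ∀ x, MonotoneOn (H x) (Ici 0))
    (hstar : ∀ x θ p, 0 ≤ θ → θ ≤ 1 → 0 ≤ p → H x (θ * p) ≤ θ * H x p + (1 - θ) * H x 0)
    (hc : IsGreatest (range fun x => H x 0) c) (hK : ∀ x, c < H x K)
    (hu : LipschitzOnWith M u (Ici 0 ×ˢ univ))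
    (husol : IsSol (Ioi (0 : ℝ) ×ˢ univ) (fun z p q => q + H z.2 p) fun z => (u z : EReal))
    (x : X) : Tendsto (fun t => u (t, x) + c * t) atTop
      (𝓝 (profile (fun x p => H x p - c) (timeInf fun t x => u (t, x) + c * t) x)) := by
  have hG : Continuous (Function.uncurry fun x p => H x p - c) := hH.sub continuous_const
  have hG0 : ∀ x, H x 0 - c ≤ 0 := fun x => sub_nonpos.2 (hc.2 (mem_range_self x))
  have hGmono : ∀ x, MonotoneOn (fun p => H x p - c) (Ici 0) := fun x p hp q hq hpq =>
    sub_le_sub_right (hmono x hp hq hpq) c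
  have hA : ∃ a, H a 0 - c = 0 := hc.1.imp fun a ha => sub_eq_zero.2 ha
  have hIoi : ContinuousOn u (Ioi (0 : ℝ) ×ˢ (univ : Set X)) :=
    hu.continuousOn.mono (prod_mono_left Ioi_subset_Ici_self)
  have hcont : ContinuousOn (Function.uncurry fun t x => u (t, x) + c * t) (Ici 0 ×ˢ univ) :=
    hu.continuousOn.add (by fun_prop)
  have hlip := fun t (ht : 0 ≤ t) => lipschitzWith_add_mul_of_lipschitzOnWith hu c ht
  have hsub := husol.1.quadSubsol hgeo c hIoi
  have hsup := husol.2.quadSupersol hgeo c hIoi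
  obtain ⟨a, b, hgrowth⟩ := exists_abs_add_mul_le_affine hu c
  obtain ⟨B, hB⟩ := exists_abs_le_of_le_affine hsub hsup hG hG0 hGmono hA hcont hlip hgrowth
  exact tendsto_profile_timeInf hgeo hG hG0 hGmono
    (fun x θ p hθ hθ1 hp => by linarith [hstar x θ p hθ hθ1 hp])
    (fun x => sub_pos.2 (hK x)) hA hsub hsup hcont hlip hB x

end Solution

theorem stmt19_general [CompactSpace X] (hgeo : IsGeodesicSpace X) (H : X → ℝ → ℝ)
    (hH : Continuous (Function.uncurry H)) (hmono : ∀ x, MonotoneOn (H x) (Ici 0))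
    (hstar : ∀ x θ p, 0 ≤ θ → θ ≤ 1 → 0 ≤ p → H x (θ * p) ≤ θ * H x p + (1 - θ) * H x 0)
    (c : ℝ) (hc : IsGreatest (range fun x => H x 0) c) (K : ℝ≥0) (hK : ∀ x, c < H x K)
    (u : ℝ × X → ℝ)
    (hulip : ∃ M : ℝ, ∀ z ∈ Ici (0 : ℝ) ×ˢ (univ : Set X), ∀ w ∈ Ici (0 : ℝ) ×ˢ (univ : Set X),
      |u z - u w| ≤ M * dist z w)
    (husol : IsSol (Ioi (0 : ℝ) ×ˢ univ) (fun z p q => q + H z.2 p) fun z => (u z : EReal))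
    (φm : X → ℝ) (hφm : ∀ x, φm x = sInf {r : ℝ | ∃ t : ℝ, 0 ≤ t ∧ r = u (t, x) + c * t})
    (S : X → X → ℝ)
    (hS : ∀ x y, S x y = sSup {r : ℝ | ∃ w : X → ℝ, Continuous w ∧
      IsSubsolS univ (fun x p => H x p - c) (fun x => (w x : EReal)) ∧ w y = 0 ∧ r = w x})
    (φinf : X → ℝ) (hφinf : ∀ x, φinf x = sInf {r : ℝ | ∃ y, H y 0 = c ∧ r = S x y + φm y})
    (x : X) : Tendsto (fun t => u (t, x) + c * t) atTop (𝓝 (φinf x)) := by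
  obtain ⟨M, hM⟩ := hulip
  have hprofile :
      profile (fun x p => H x p - c) (timeInf fun t x => u (t, x) + c * t) x = φinf x := by
    simp only [profile, critDist, timeInf, IsContSubsol, hφinf, hS, hφm, and_assoc, sub_eq_zero]
  rw [← hprofile]
  exact husol.tendsto_profile hgeo hH hmono hstar hc hK (LipschitzOnWith.of_dist_le' hM) x

/-- asymptotic profile. -/
theorem stmt19 [CompactSpace X] [Nonempty X] (hgeo : IsGeodesicSpace X)
    (H : X → ℝ → ℝ)
    (heven : ∀ x p, H x p = H x |p|)
    (hA1 : Continuous fun w : X × ℝ => H w.1 w.2)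
    (hA2 : ∀ x, ConvexOn ℝ Set.univ (H x))
    (hA3 : ∀ M : ℝ, ∃ p₀ : ℝ, ∀ p ≥ p₀, ∀ x, M ≤ H x p)
    (hA4 : BddAbove (Set.range fun x => H x 0))
    (c : ℝ) (hc : IsGreatest (Set.range fun x => H x 0) c)
    (hA : {x : X | H x 0 = c}.Nonempty)
    (u₀ : X → ℝ) (L₀ : NNReal) (hu₀ : LipschitzWith L₀ u₀)
    (u : ℝ × X → ℝ)
    (hucont : ContinuousOn u (Set.Ici (0:ℝ) ×ˢ (Set.univ : Set X)))
    (hulip : ∃ M : ℝ, ∀ z ∈ Set.Ici (0:ℝ) ×ˢ (Set.univ : Set X),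
      ∀ w ∈ Set.Ici (0:ℝ) ×ˢ (Set.univ : Set X), |u z - u w| ≤ M * dist z w)
    (hini : ∀ x : X, u (0, x) = u₀ x)
    (husol : IsSol (Set.Ioi (0:ℝ) ×ˢ (Set.univ : Set X)) (fun z p q => q + H z.2 p)
      (fun z => ((u z : ℝ) : EReal)))
    (φm : X → ℝ)
    (hφm : ∀ x : X, φm x = sInf {r : ℝ | ∃ t : ℝ, 0 ≤ t ∧ r = u (t, x) + c * t})
    (S : X → X → ℝ)
    (hS : ∀ x y : X, S x y = sSup {r : ℝ | ∃ w : X → ℝ, Continuous w ∧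
      IsSubsolS (Set.univ : Set X) (fun x' p => H x' p - c) (fun x' => ((w x' : ℝ) : EReal)) ∧
      w y = 0 ∧ r = w x})
    (φinf : X → ℝ)
    (hφinf : ∀ x : X, φinf x = sInf {r : ℝ | ∃ y : X, H y 0 = c ∧ r = S x y + φm y}) :
    ∀ x : X, Filter.Tendsto (fun t : ℝ => u (t, x) + c * t) Filter.atTop (𝓝 (φinf x)) := by
  obtain ⟨p₀, hp₀⟩ := hA3 (c + 1)
  exact stmt19_general hgeo H hA1 (fun x => monotoneOn_Ici_of_convexOn_of_even (hA2 x) (heven x))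
    (fun x θ p hθ hθ1 _ => apply_mul_le_of_convexOn (hA2 x) hθ hθ1 p) c hc p₀.toNNReal
    (fun x => (lt_add_one c).trans_le (hp₀ _ (Real.le_coe_toNNReal p₀) x)) u hulip husol
    φm hφm S hS φinf hφinf
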